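/- arXiv:2408.04618 — 2 statements merged into one kernel-verified Lean document; each statement's English description precedes it below -/
import Mathlib

section
/- There exists a constant C > 0 such that the following holds. Let G be a 2-connected finite simple graph containing two longest cycles C1 and C2, and let k := |V(C1) ∩ V(C2)|. Then there exists a set T ⊆ V(G) with |T| ≤ C · k^{8/5} such that every longest cycle of G contains a vertex of T. -/
/-!
Two longest cycles `C₁` and `C₂` of a 2-connected graph meet, so every longest cycle meets both, and
hence meets every vertex set separating `V(C₁)` from `V(C₂)`. We take a minimum such set `T`; by
Menger's theorem its size is the largest number of disjoint `V(C₁)`-`V(C₂)` paths.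

At most `k` of these paths use a common vertex of the two cycles. Any other path contains a
*bridge*, which avoids the common vertices. The common vertices cut each cycle into segments, with
at most `n = k + 1` labels on each side, and the bridges are the edges of a bipartite graph between
these segments. Exchanging arcs of `C₁` for detours through bridges and arcs of `C₂` cannot give a
longer cycle, nor can the symmetric exchange on `C₂`. For parallel edges, and for 4-cycles and
hexagons whose bridges are suitably ordered along both cycles, these two conditions contradict each
other. If the cycles were disjoint, then all bridges would be parallel, although 2-connectedness
provides two of them: this is why longest cycles meet.

Consider an edge `g` together with a pair of edges at each of its two ends. If two such
configurations agree in the four other ends of their edges and in the relative order of the edges,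
then they form one of the forbidden patterns unless they are equal, so there are `O(n⁴)` of them. On
the other hand, `m` bridges produce at least `Ω(m⁵ / n⁴)` of them as soon as `m ≥ 16 n`, because at
least half of the bridges lie at two segments of degree at least `m / 4n`. Hence `m⁵ = O(n⁸)`.
-/

open SimpleGraph

/-- `c` is a longest cycle in `G`: it is a cycle and its length is at least
the length of every cycle in `G`. -/
def IsLongestCycle {V : Type*} (G : SimpleGraph V) {v : V} (c : G.Walk v v) : Prop :=
  c.IsCycle ∧ ∀ (u : V) (c' : G.Walk u u), c'.IsCycle → c'.length ≤ c.length

/-! ### Paths and Menger's theorem -/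

section PathOn

variable {V : Type*} [DecidableEq V] {r r' : V → V → Prop} {W W₁ W₂ : Finset V} {s t u z : V}

/-- `PathOn r W s t` says that the digraph `r` has a directed path from `s` to `t` whose vertex set
is exactly `W`. Paths of a graph are `PathOn G.Adj`; recording only the vertex set is enough to
express disjointness of paths and lengths of cycles. -/
inductive PathOn (r : V → V → Prop) : Finset V → V → V → Prop
  | single (v : V) : PathOn r {v} v v
  | cons {W : Finset V} {s t u : V} :
      r s t → PathOn r W t u → s ∉ W → PathOn r (insert s W) s u

namespace PathOn

lemma start_mem (h : PathOn r W s t) : s ∈ W := by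
  cases h <;> simp

lemma end_mem (h : PathOn r W s t) : t ∈ W := by
  induction h with
  | single v => simp
  | cons _ _ _ ih => exact Finset.mem_insert_of_mem ih

lemma join (h₁ : PathOn r W₁ s t) (h₂ : PathOn r W₂ t u) (h : ∀ z ∈ W₁, z ∈ W₂ → z = t) :
    PathOn r (W₁ ∪ W₂) s u := by
  induction h₁ with
  | single v => rwa [Finset.singleton_union, Finset.insert_eq_of_mem h₂.start_mem]
  | @cons W s v t hsv hW hs ih =>
    have hs₂ : s ∉ W₂ := fun hs' => hs (h s (by simp) hs' ▸ hW.end_mem)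
    rw [Finset.insert_union]
    exact cons hsv (ih h₂ fun z hz => h z (by simp [hz])) (by simp [hs, hs₂])

lemma append (h₁ : PathOn r W₁ s t) (htz : r t z) (h₂ : PathOn r W₂ z u)
    (h : Disjoint W₁ W₂) : PathOn r (W₁ ∪ W₂) s u := by
  have ht : t ∉ W₂ := Finset.disjoint_left.1 h h₁.end_mem
  have key := h₁.join (cons htz h₂ ht) fun z hz hz' =>
    (Finset.mem_insert.1 hz').resolve_right (Finset.disjoint_left.1 h hz)
  rwa [Finset.union_insert, ← Finset.insert_union, Finset.insert_eq_of_mem h₁.end_mem] at key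

lemma symm (hr : Std.Symm r) (h : PathOn r W s t) : PathOn r W t s := by
  induction h with
  | single v => exact single v
  | @cons W s v t hsv hW hs ih =>
    rw [Finset.insert_eq, Finset.union_comm]
    exact ih.append (hr.symm _ _ hsv) (single s) (by simpa using hs)

lemma mono_on (h : PathOn r W s t)
    (hr : ∀ a ∈ W, ∀ b ∈ W, a ≠ t → b ≠ s → r a b → r' a b) : PathOn r' W s t := by
  induction h with
  | single v => exact single v
  | @cons W s v t hsv hW hs ih =>
    have hne : ∀ a ∈ W, a ≠ s := fun a ha has => hs (has ▸ ha)
    refine cons (hr s (by simp) v (by simp [hW.start_mem]) (hne t hW.end_mem).symm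
      (hne v hW.start_mem) hsv) (ih fun a ha b hb hat _ => ?_) hs
    exact hr a (by simp [ha]) b (by simp [hb]) hat (hne b hb)

lemma exists_prefix (h : PathOn r W s t) (hz : z ∈ W) :
    ∃ W' ⊆ W, PathOn r W' s z ∧ (z ≠ t → t ∉ W') := by
  induction h with
  | single v => exact ⟨{v}, subset_rfl, by simp_all [single], by simp_all⟩
  | @cons W s v t hsv hW hs ih =>
    have hts : t ≠ s := fun h => hs (h ▸ hW.end_mem)
    rcases Finset.mem_insert.1 hz with rfl | hz
    · exact ⟨{z}, by simp, single z, fun _ => by simpa using hts⟩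
    · obtain ⟨W', hW', hp, ht⟩ := ih hz
      refine ⟨insert s W', Finset.insert_subset_insert s hW', cons hsv hp fun h => hs (hW' h), ?_⟩
      simpa [hts] using ht

lemma exists_suffix (h : PathOn r W s t) (hz : z ∈ W) :
    ∃ W' ⊆ W, PathOn r W' z t ∧ (z ≠ s → s ∉ W') := by
  induction h with
  | single v => exact ⟨{v}, subset_rfl, by simp_all [single], by simp_all⟩
  | @cons W s v _ hsv hW hs ih =>
    rcases Finset.mem_insert.1 hz with rfl | hz
    · exact ⟨_, subset_rfl, cons hsv hW hs, fun h => absurd rfl h⟩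
    · obtain ⟨W', hW', hp, -⟩ := ih hz
      exact ⟨W', hW'.trans (Finset.subset_insert s W), hp, fun _ h => hs (hW' h)⟩

lemma exists_trans (h₁ : PathOn r W₁ s t) (h₂ : PathOn r W₂ t u) :
    ∃ W ⊆ W₁ ∪ W₂, PathOn r W s u := by
  induction h₁ with
  | single v => exact ⟨W₂, Finset.subset_union_right, h₂⟩
  | @cons W s _ _ hsv _ _ ih =>
    obtain ⟨W', hW', hp⟩ := ih h₂
    rw [Finset.insert_union]
    by_cases hs' : s ∈ W'
    · obtain ⟨W'', hW'', hp', -⟩ := hp.exists_suffix hs'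
      exact ⟨W'', (hW''.trans hW').trans (Finset.subset_insert _ _), hp'⟩
    · exact ⟨insert s W', Finset.insert_subset_insert s hW', cons hsv hp hs'⟩

lemma exists_first (h : PathOn r W s t) {Z : V → Prop} (hZ : ∃ z ∈ W, Z z) :
    ∃ W' ⊆ W, ∃ z, PathOn r W' s z ∧ Z z ∧ ∀ w ∈ W', Z w → w = z := by
  induction h with
  | single v => exact ⟨{v}, subset_rfl, v, single v, by simpa using hZ, by simp⟩
  | @cons W s _ _ hsv _ hs ih =>
    by_cases hZs : Z s
    · exact ⟨{s}, by simp, s, single s, hZs, by simp⟩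
    · obtain ⟨W', hW', z, hp, hz, hu⟩ := ih (by simpa [hZs] using hZ)
      refine ⟨insert s W', Finset.insert_subset_insert s hW', z, cons hsv hp fun h => hs (hW' h),
        hz, ?_⟩
      simpa [hZs] using hu

lemma exists_last (h : PathOn r W s t) {Z : V → Prop} (hZ : ∃ z ∈ W, Z z) :
    ∃ W' ⊆ W, ∃ z, PathOn r W' z t ∧ Z z ∧ ∀ w ∈ W', Z w → w = z := by
  induction h with
  | single v => exact ⟨{v}, subset_rfl, v, single v, by simpa using hZ, by simp⟩
  | @cons W s v t hsv hW hs ih =>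
    by_cases hZW : ∃ z ∈ W, Z z
    · obtain ⟨W', hW', z, hp⟩ := ih hZW
      exact ⟨W', hW'.trans (Finset.subset_insert s W), z, hp⟩
    · push Not at hZW
      have hZs : Z s := by
        obtain ⟨z, hz, hzZ⟩ := hZ
        rcases Finset.mem_insert.1 hz with rfl | hz
        exacts [hzZ, absurd hzZ (hZW z hz)]
      refine ⟨insert s W, subset_rfl, s, cons hsv hW hs, hZs, fun w hw hwZ => ?_⟩
      exact (Finset.mem_insert.1 hw).resolve_right fun h => hZW w h hwZ

lemma exists_trim {A B : Finset V} (h : PathOn r W s t) (hs : s ∈ A) (ht : t ∈ B) :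
    ∃ W' ⊆ W, ∃ a b, PathOn r W' a b ∧ a ∈ A ∧ b ∈ B ∧
      (∀ z ∈ W', z ∈ A → z = a) ∧ ∀ z ∈ W', z ∈ B → z = b := by
  obtain ⟨W₁, hW₁, b, h₁, hb, eq_b⟩ := h.exists_first (Z := (· ∈ B)) ⟨t, h.end_mem, ht⟩
  obtain ⟨W₂, hW₂, a, h₂, ha, eq_a⟩ := h₁.exists_last (Z := (· ∈ A)) ⟨s, h₁.start_mem, hs⟩
  exact ⟨W₂, hW₂.trans hW₁, a, b, h₂, ha, hb, eq_a, fun z hz => eq_b z (hW₂ hz)⟩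

lemma exists_tail (h : PathOn r W s t) (hst : s ≠ t) :
    ∃ v, r s v ∧ PathOn r (W.erase s) v t := by
  cases h with
  | single => exact absurd rfl hst
  | @cons W _ v _ hsv hW hs => exact ⟨v, hsv, by rwa [Finset.erase_insert hs]⟩

end PathOn

end PathOn

section Menger

variable {V : Type*} [DecidableEq V] {r r' : V → V → Prop} {A B R S : Finset V} {x y : V}

/-- `S` meets every directed path of `r` from `A` to `B`, including the trivial paths at the
vertices of `A ∩ B`. -/
def Separates (r : V → V → Prop) (A B S : Finset V) : Prop :=
  ∀ ⦃W s t⦄, PathOn r W s t → s ∈ A → t ∈ B → ∃ z ∈ W, z ∈ S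

/-- `P` is a family of disjoint directed paths of `r` from `A` to `B`, each given by its vertex
set. -/
structure IsLinkage {ι : Type*} (r : V → V → Prop) (A B : Finset V) (P : ι → Finset V) : Prop where
  disjoint : Pairwise (Function.onFun Disjoint P)
  pathOn : ∀ i, ∃ s ∈ A, ∃ t ∈ B, PathOn r (P i) s t

lemma Separates.insert (hS : Separates r' A B S) (v : V)
    (hr : ∀ a b, r a b → r' a b ∨ a = v ∨ b = v) : Separates r A B (insert v S) := by
  intro W s t hW hs ht
  by_cases hv : v ∈ W
  · exact ⟨v, hv, Finset.mem_insert_self v S⟩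
  · obtain ⟨z, hzW, hzS⟩ := hS (hW.mono_on fun a ha b hb _ _ hab =>
      (hr a b hab).resolve_right (by rintro (rfl | rfl) <;> contradiction)) hs ht
    exact ⟨z, hzW, Finset.mem_insert_of_mem hzS⟩

lemma Separates.of_left (hS : Separates r A B S) (hR : Separates r' A S R)
    (hr : ∀ a b, a ∉ S → r a b → r' a b) : Separates r A B R := by
  intro W s t hW hs ht
  obtain ⟨W', hW', z, hp, hz, hu⟩ := hW.exists_first (hS hW hs ht)
  obtain ⟨w, hw, hwR⟩ := hR (hp.mono_on fun a ha b _ haz _ => hr a b fun h => haz (hu a ha h)) hs hz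
  exact ⟨w, hW' hw, hwR⟩

lemma Separates.of_right (hS : Separates r A B S) (hR : Separates r' S B R)
    (hr : ∀ a b, b ∉ S → r a b → r' a b) : Separates r A B R := by
  intro W s t hW hs ht
  obtain ⟨W', hW', z, hp, hz, hu⟩ := hW.exists_last (hS hW hs ht)
  obtain ⟨w, hw, hwR⟩ := hR (hp.mono_on fun a _ b hb _ hbz => hr a b fun h => hbz (hu b hb h)) hz ht
  exact ⟨w, hW' hw, hwR⟩

lemma Separates.mem_of_mem_of_mem (hS : Separates r A B S) {P Q : Finset V} {s p q t w : V}
    (hP : PathOn r P s p) (hs : s ∈ A) (hPS : ∀ z ∈ P, z ∈ S → z = p)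
    (hQ : PathOn r Q q t) (ht : t ∈ B) (hQS : ∀ z ∈ Q, z ∈ S → z = q)
    (hwP : w ∈ P) (hwQ : w ∈ Q) : w ∈ S := by
  by_contra hwS
  obtain ⟨P', hP', hsw, hp⟩ := hP.exists_prefix hwP
  obtain ⟨Q', hQ', hwt, hq⟩ := hQ.exists_suffix hwQ
  obtain ⟨W, hW, hst⟩ := hsw.exists_trans hwt
  obtain ⟨z, hzW, hzS⟩ := hS hst hs ht
  have hzw : w ≠ z := fun h => hwS (h ▸ hzS)
  rcases Finset.mem_union.1 (hW hzW) with hz | hz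
  · obtain rfl := hPS z (hP' hz) hzS
    exact hp hzw hz
  · obtain rfl := hQS z (hQ' hz) hzS
    exact hq hzw hz

lemma IsLinkage.eq_of_mem_of_mem {ι : Type*} {P : ι → Finset V} (hP : IsLinkage r A B P) {i j : ι}
    {z : V} (hi : z ∈ P i) (hj : z ∈ P j) : i = j :=
  hP.disjoint.eq (Finset.not_disjoint_iff.2 ⟨z, hi, hj⟩)

lemma IsLinkage.mono {ι : Type*} {P : ι → Finset V} (hP : IsLinkage r' A B P)
    (hr : ∀ a b, r' a b → r a b) : IsLinkage r A B P where
  disjoint := hP.disjoint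
  pathOn i := by
    obtain ⟨s, hs, t, ht, h⟩ := hP.pathOn i
    exact ⟨s, hs, t, ht, h.mono_on fun a _ b _ _ _ => hr a b⟩

lemma IsLinkage.transversal {ι : Type*} [Fintype ι] {P : ι → Finset V} {T : Finset V} {p : ι → V}
    (hP : IsLinkage r A B P) (hpP : ∀ i, p i ∈ P i) (hpT : ∀ i, p i ∈ T)
    (hcard : T.card = Fintype.card ι) :
    p.Injective ∧ (∀ z ∈ T, ∃ i, p i = z) ∧ ∀ i, ∀ z ∈ P i, z ∈ T → z = p i := by
  have inj : p.Injective := fun i j h => hP.eq_of_mem_of_mem (hpP i) (h ▸ hpP j)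
  have surj : ∀ z ∈ T, ∃ i, p i = z := fun z hz => by
    obtain ⟨i, -, hi⟩ := Finset.surjOn_of_injOn_of_card_le (s := Finset.univ) p
      (by simpa using hpT) inj.injOn (by simp [hcard]) hz
    exact ⟨i, hi⟩
  refine ⟨inj, surj, fun i z hz hzT => ?_⟩
  obtain ⟨j, rfl⟩ := surj z hzT
  rw [hP.eq_of_mem_of_mem hz (hpP j)]

lemma IsLinkage.exists_combine {ι : Type*} [Fintype ι] {P Q : ι → Finset V}
    (hS : Separates r A B S) (hx : x ∉ S) (hy : y ∉ S) (hcard : S.card + 1 = Fintype.card ι)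
    (hP : IsLinkage r A (insert x S) P) (hQ : IsLinkage r (insert y S) B Q)
    (hr : ∀ a b, r a b → r' a b) (hxy : r' x y) : ∃ P' : ι → Finset V, IsLinkage r' A B P' := by
  choose s hs p hp hPp using hP.pathOn
  choose q hq t ht hQq using hQ.pathOn
  obtain ⟨p_inj, -, hpS⟩ := hP.transversal (fun i => (hPp i).end_mem) hp (by simp [hx, hcard])
  obtain ⟨-, q_surj, hqS⟩ := hQ.transversal (fun i => (hQq i).start_mem) hq (by simp [hy, hcard])
  have hPS := fun i z hz hzS => hpS i z hz (Finset.mem_insert_of_mem hzS)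
  have hQS := fun i z hz hzS => hqS i z hz (Finset.mem_insert_of_mem hzS)
  have meet : ∀ {i j w}, w ∈ P i → w ∈ Q j → w ∈ S ∧ w = p i ∧ w = q j := fun {i j w} hi hj => by
    have hwS := hS.mem_of_mem_of_mem (hPp i) (hs i) (hPS i) (hQq j) (ht j) (hQS j) hi hj
    exact ⟨hwS, hPS i w hi hwS, hQS j w hj hwS⟩
  have glue : ∀ i, ∃ j, p i = x ∧ q j = y ∨ p i ∈ S ∧ q j = p i := fun i => by
    rcases Finset.mem_insert.1 (hp i) with hi | hi
    · exact (q_surj y (Finset.mem_insert_self y S)).imp fun j hj => .inl ⟨hi, hj⟩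
    · exact (q_surj _ (Finset.mem_insert_of_mem hi)).imp fun j hj => .inr ⟨hi, hj⟩
  choose τ hτ using glue
  have τ_inj : τ.Injective := fun i j h => p_inj (by
    rcases hτ i with ⟨hi, hi'⟩ | ⟨hi, hi'⟩ <;> rcases hτ j with ⟨hj, hj'⟩ | ⟨hj, hj'⟩ <;> grind)
  have cross : ∀ {i j w}, w ∈ P i → w ∈ Q (τ j) → i = j := fun {i j w} hi hj => p_inj (by
    obtain ⟨hwS, hwp, hwq⟩ := meet hi hj
    grind)
  refine ⟨fun i => P i ∪ Q (τ i), fun i j hij => ?_, fun i => ⟨s i, hs i, t (τ i), ht _, ?_⟩⟩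
  · refine Finset.disjoint_left.2 fun w hi hj => hij ?_
    rcases Finset.mem_union.1 hi with hi | hi <;> rcases Finset.mem_union.1 hj with hj | hj
    exacts [hP.eq_of_mem_of_mem hi hj, cross hi hj, (cross hj hi).symm,
      τ_inj (hQ.eq_of_mem_of_mem hi hj)]
  · have hPr := (hPp i).mono_on fun a _ b _ _ _ => hr a b
    have hQr := (hQq (τ i)).mono_on fun a _ b _ _ _ => hr a b
    rcases hτ i with ⟨hi, hi'⟩ | ⟨hi, hi'⟩
    · rw [hi] at hPr
      rw [hi'] at hQr
      refine hPr.append hxy hQr (Finset.disjoint_left.2 fun w hw hw' => hx ?_)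
      obtain ⟨hwS, rfl, -⟩ := meet hw hw'
      rwa [hi] at hwS
    · rw [hi'] at hQr
      exact hPr.join hQr fun w hw hw' => (meet hw hw').2.1

/-- Menger's theorem, by Göring's induction on the arcs: if deleting the arc from `x` to `y` leaves
a separator `S` that is too small, then `insert x S` and `insert y S` are minimum separators. -/
theorem exists_isLinkage_of_finset (E : Finset (V × V)) {k : ℕ}
    (hk : ∀ S, Separates (fun a b => (a, b) ∈ E) A B S → k ≤ S.card) :
    ∃ P : Fin k → Finset V, IsLinkage (fun a b => (a, b) ∈ E) A B P := by
  induction E using Finset.induction_on generalizing A B with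
  | empty =>
    have hAB : Separates (fun a b => (a, b) ∈ (∅ : Finset (V × V))) A B (A ∩ B) := by
      rintro W s t (_ | ⟨h, -, -⟩) hs ht
      · exact ⟨s, by simp, by simp [hs, ht]⟩
      · simp at h
    obtain ⟨I, hI, hcard⟩ := Finset.exists_subset_card_eq (hk _ hAB)
    let f := (I.equivFinOfCardEq hcard).symm
    refine ⟨fun i => {(f i).1}, fun i j hij => ?_, fun i => ?_⟩
    · simpa [Function.onFun, Subtype.val_inj] using hij
    · obtain ⟨hA, hB⟩ := Finset.mem_inter.1 (hI (f i).2)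
      exact ⟨_, hA, _, hB, .single _⟩
  | insert e E he ih =>
    obtain ⟨x, y⟩ := e
    have hmono : ∀ a b, (a, b) ∈ E → (a, b) ∈ insert (x, y) E := fun a b =>
      Finset.mem_insert_of_mem
    have harc : ∀ a b, (a, b) ∈ insert (x, y) E → (a, b) ∈ E ∨ a = x ∧ b = y := fun a b h => by
      simpa [or_comm] using h
    by_cases hE : ∀ S, Separates (fun a b => (a, b) ∈ E) A B S → k ≤ S.card
    · obtain ⟨P, hP⟩ := ih hE
      exact ⟨P, hP.mono hmono⟩
    push Not at hE
    obtain ⟨S, hS, hcard⟩ := hE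
    have hSx := hS.insert x fun a b h => (harc a b h).imp_right fun h => .inl h.1
    have hSy := hS.insert y fun a b h => (harc a b h).imp_right fun h => .inr h.2
    have hx : x ∉ S := fun h => hcard.not_ge (by simpa [h] using hk _ hSx)
    have hy : y ∉ S := fun h => hcard.not_ge (by simpa [h] using hk _ hSy)
    have hkS : S.card + 1 = k :=
      le_antisymm hcard (by simpa [hx] using hk _ hSx)
    obtain ⟨P, hP⟩ := ih (A := A) (B := insert x S) fun R hR => hk R <| hSx.of_left hR
      fun a b ha h => (harc a b h).resolve_right fun h => ha (by simp [h.1])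
    obtain ⟨Q, hQ⟩ := ih (A := insert y S) (B := B) fun R hR => hk R <| hSy.of_right hR
      fun a b hb h => (harc a b h).resolve_right fun h => hb (by simp [h.2])
    exact hP.exists_combine hS hx hy (by simpa using hkS) hQ hmono (Finset.mem_insert_self _ _)

theorem exists_separates_and_isLinkage (hr : {e : V × V | r e.1 e.2}.Finite) (A B : Finset V) :
    ∃ S, Separates r A B S ∧ ∃ P : Fin S.card → Finset V, IsLinkage r A B P := by
  have hA : Separates r A B A := fun W s t hW hs _ => ⟨s, hW.start_mem, hs⟩
  obtain ⟨S, hS, hmin⟩ := exists_minimalFor_of_wellFoundedLT _ Finset.card ⟨A, hA⟩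
  have key := exists_isLinkage_of_finset hr.toFinset (A := A) (B := B) (k := S.card)
  simp only [Set.Finite.mem_toFinset, Set.mem_ofPred_eq] at key
  exact ⟨S, hS, key fun R hR => (le_total _ _).elim id (hmin hR)⟩

end Menger

/-! ### Rerouting a longest cycle -/

section Reroute

variable {V : Type*} {G : SimpleGraph V} {u : V} {c : G.Walk u u}

lemma getVert_inj_of_lt (hc : c.IsCycle) {i j : ℕ} (hi : i < c.length) (hj : j < c.length)
    (h : c.getVert i = c.getVert j) : i = j :=
  hc.getVert_injOn' (by simp; omega) (by simp; omega) h

lemma exists_getVert_lt (hc : c.IsCycle) {z : V} (hz : z ∈ c.support) :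
    ∃ i < c.length, c.getVert i = z := by
  obtain ⟨i, rfl, hi⟩ := Walk.mem_support_iff_exists_getVert.1 hz
  rcases hi.lt_or_eq with hi | rfl
  · exact ⟨i, hi, rfl⟩
  · exact ⟨0, by have := hc.three_le_length; omega, by simp⟩

variable [DecidableEq V]

lemma PathOn.of_isPath {s t : V} {p : G.Walk s t} (hp : p.IsPath) :
    PathOn G.Adj p.support.toFinset s t := by
  induction p with
  | nil => simpa using PathOn.single _
  | cons h p ih =>
    obtain ⟨hp, hs⟩ := (Walk.cons_isPath_iff h p).1 hp
    simpa using PathOn.cons h (ih hp) (by simpa using hs)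

lemma PathOn.exists_isPath {W : Finset V} {s t : V} (h : PathOn G.Adj W s t) :
    ∃ p : G.Walk s t, p.IsPath ∧ p.support.toFinset = W := by
  induction h with
  | single v => exact ⟨.nil, by simp, by simp⟩
  | @cons W s v t hsv _ hs ih =>
    obtain ⟨p, hp, rfl⟩ := ih
    exact ⟨.cons hsv p, hp.cons (by simpa using hs), by simp⟩

lemma PathOn.exists_isCycle {W : Finset V} {s t : V} (h : PathOn G.Adj W s t) (hts : G.Adj t s)
    (hW : 3 ≤ W.card) : ∃ c : G.Walk t t, c.IsCycle ∧ c.length = W.card := by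
  obtain ⟨p, hp, rfl⟩ := h.exists_isPath
  have hcard : p.support.toFinset.card = p.length + 1 := by
    rw [List.toFinset_card_of_nodup hp.support_nodup, Walk.length_support]
  refine ⟨.cons hts p, (Walk.cons_isCycle_iff _ _).2 ⟨hp, fun he => ?_⟩, by simp [hcard]⟩
  rw [Sym2.eq_swap] at he
  have := hp.length_eq_one_of_mem_edges he
  omega

lemma disjoint_image_getVert {R : Finset V} (hR : ∀ z ∈ R, z ∉ c.support) (I : Finset ℕ) :
    Disjoint (I.image c.getVert) R :=
  Finset.disjoint_left.2 fun z hz hzR => by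
    obtain ⟨m, -, rfl⟩ := Finset.mem_image.1 hz
    exact hR _ hzR (c.getVert_mem_support m)

/-- A path of `G` from position `i` to position `j` of the closed walk `c`. It uses exactly the
positions in `I` and the vertices in `U`, which are off `c`, and it has `n` vertices. -/
structure Route (c : G.Walk u u) (I : Finset ℕ) (U : Finset V) (n i j : ℕ) : Prop where
  lt_length : ∀ m ∈ I, m < c.length
  off : ∀ z ∈ U, z ∉ c.support
  card : I.card + U.card = n
  pathOn : PathOn G.Adj (I.image c.getVert ∪ U) (c.getVert i) (c.getVert j)

/-- `R` is the interior of a path of `G` that joins positions `i` and `j` of the closed walk `c` and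
is otherwise disjoint from `c`. -/
structure Detour (c : G.Walk u u) (R : Finset V) (i j : ℕ) : Prop where
  off : ∀ z ∈ R, z ∉ c.support
  exists_pathOn : ∃ g g', G.Adj (c.getVert i) g ∧ PathOn G.Adj R g g' ∧ G.Adj g' (c.getVert j)

lemma Detour.symm {R : Finset V} {i j : ℕ} (h : Detour c R i j) : Detour c R j i := by
  obtain ⟨hR, g, g', hg, hp, hg'⟩ := h
  exact ⟨hR, g', g, hg'.symm, hp.symm G.symm, hg.symm⟩

namespace Route

variable {I I' : Finset ℕ} {R U : Finset V} {n n' i j a b : ℕ}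

lemma symm (h : Route c I U n i j) : Route c I U n j i :=
  { h with pathOn := h.pathOn.symm G.symm }

lemma arc (hc : c.IsCycle) (hij : i ≤ j) (hj : j < c.length) :
    Route c (Finset.Icc i j) ∅ (j + 1 - i) i j := by
  refine ⟨fun m hm => (Finset.mem_Icc.1 hm).2.trans_lt hj, by simp, by simp, ?_⟩
  induction j, hij using Nat.le_induction with
  | base => simpa using PathOn.single _
  | succ j hij ih =>
    have hIcc : Finset.Icc i (j + 1) = insert (j + 1) (Finset.Icc i j) :=
      (Finset.insert_Icc_right_eq_Icc_succ (by simpa using hij.trans j.le_succ)).symm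
    have hnot : Disjoint ((Finset.Icc i j).image c.getVert ∪ ∅) {c.getVert (j + 1)} := by
      simp only [Finset.union_empty, Finset.disjoint_singleton_right, Finset.mem_image,
        Finset.mem_Icc, not_exists, not_and, and_imp]
      intro m _ hm h
      have := getVert_inj_of_lt hc (by omega) hj h
      omega
    have key := (ih (by omega)).append (c.adj_getVert_succ (by omega)) (.single _) hnot
    simpa [hIcc, Finset.union_comm] using key

lemma disjoint_image (hc : c.IsCycle) (h : Route c I U n i j) (h' : Route c I' ∅ n' a b)
    (hI : Disjoint I I') : Disjoint (I.image c.getVert ∪ U) (I'.image c.getVert ∪ ∅) := by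
  have hII' : Disjoint (I.image c.getVert) (I'.image c.getVert) :=
    Finset.disjoint_left.2 fun z hz hz' => by
      obtain ⟨m, hm, rfl⟩ := Finset.mem_image.1 hz
      obtain ⟨m', hm', h_eq⟩ := Finset.mem_image.1 hz'
      obtain rfl := getVert_inj_of_lt hc (h'.lt_length m' hm') (h.lt_length m hm) h_eq
      exact Finset.disjoint_left.1 hI hm hm'
  simpa [hII'] using (disjoint_image_getVert h.off I').symm

lemma wrap (hc : c.IsCycle) (hij : i < j) (hj : j < c.length) :
    Route c (Finset.Icc j (c.length - 1) ∪ Finset.Icc 0 i) ∅ (c.length - j + (i + 1)) j i := by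
  have hI : Disjoint (Finset.Icc j (c.length - 1)) (Finset.Icc 0 i) := by
    simp only [Finset.disjoint_left, Finset.mem_Icc]
    omega
  have h₁ := arc hc (Nat.le_sub_one_of_lt hj) (by omega)
  have h₂ := arc hc (Nat.zero_le i) (by omega)
  refine ⟨fun m hm => ?_, by simp, ?_, ?_⟩
  · exact (Finset.mem_union.1 hm).elim (h₁.lt_length m) (h₂.lt_length m)
  · rw [Finset.card_union_of_disjoint hI]
    simp
    omega
  · have hadj : G.Adj (c.getVert (c.length - 1)) (c.getVert 0) := by
      simpa [Nat.sub_add_cancel (Nat.one_le_of_lt hj)] using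
        c.adj_getVert_succ (i := c.length - 1) (by omega)
    simpa [Finset.image_union] using
      h₁.pathOn.append hadj h₂.pathOn (h₁.disjoint_image hc h₂ hI)

lemma link (hc : c.IsCycle) (h : Route c I U n i a) (hR : Detour c R a b)
    (h' : Route c I' ∅ n' b j) (hI : Disjoint I I') (hU : Disjoint U R) :
    Route c (I ∪ I') (U ∪ R) (n + R.card + n') i j := by
  obtain ⟨hoff, g, g', hg, hp, hg'⟩ := hR
  have on_off := disjoint_image_getVert hoff
  have hdis : Disjoint (I.image c.getVert ∪ U ∪ R) (I'.image c.getVert ∪ ∅) :=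
    Finset.disjoint_union_left.2 ⟨h.disjoint_image hc h' hI, by simpa using (on_off I').symm⟩
  refine ⟨fun m hm => ?_, fun z hz => ?_, ?_, ?_⟩
  · exact (Finset.mem_union.1 hm).elim (h.lt_length m) (h'.lt_length m)
  · exact (Finset.mem_union.1 hz).elim (h.off z) (hoff z)
  · have h_card := h.card
    have h_card' := h'.card
    rw [Finset.card_union_of_disjoint hI, Finset.card_union_of_disjoint hU]
    simp only [Finset.card_empty, add_zero] at h_card'
    omega
  · have key := (h.pathOn.append hg hp (Finset.disjoint_union_left.2 ⟨on_off I, hU⟩)).append hg'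
      h'.pathOn hdis
    convert key using 1
    rw [Finset.image_union, Finset.union_empty, Finset.union_assoc _ U R, Finset.union_right_comm]

lemma card_image_union (hc : c.IsCycle) (h : Route c I U n i j) :
    (I.image c.getVert ∪ U).card = n := by
  rw [Finset.card_union_of_disjoint (disjoint_image_getVert h.off I),
    Finset.card_image_of_injOn fun a ha b hb =>
      getVert_inj_of_lt hc (h.lt_length a ha) (h.lt_length b hb), h.card]

lemma card_add_card_le (hc : IsLongestCycle G c) (h : Route c I U n i j) (hR : Detour c R j i)
    (hU : Disjoint U R) : n + R.card ≤ c.length := by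
  obtain ⟨hoff, g, g', hg, hp, hg'⟩ := hR
  have hdis : Disjoint (I.image c.getVert ∪ U) R :=
    Finset.disjoint_union_left.2 ⟨disjoint_image_getVert hoff I, hU⟩
  have hcard : (I.image c.getVert ∪ U ∪ R).card = n + R.card := by
    rw [Finset.card_union_of_disjoint hdis, h.card_image_union hc.1]
  by_cases h3 : 3 ≤ n + R.card
  · obtain ⟨c', hc', hlen⟩ := (h.pathOn.append hg hp hdis).exists_isCycle hg' (by omega)
    have := hc.2 _ c' hc'
    omega
  · have := hc.1.three_le_length
    omega

end Route

section LongestCycle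

variable {R₁ R₂ R₃ : Finset V} {p₁ p₂ p₃ p₄ p₅ p₆ : ℕ}

-- The digits name the positions that the detours join. The new cycle consists of the detours and of
-- `c` without the interiors of the arcs `p₁p₂`, `p₃p₄` and `p₅p₆`.
lemma card_detour_12_lt (hc : IsLongestCycle G c) (h₁ : p₁ < p₂) (hL : p₂ < c.length)
    (hR₁ : Detour c R₁ p₁ p₂) : R₁.card < p₂ - p₁ := by
  have := (Route.wrap hc.1 h₁ hL).card_add_card_le hc hR₁ (by simp)
  omega

lemma card_detours_13_24_lt (hc : IsLongestCycle G c) (h₁ : p₁ < p₂) (h₂ : p₂ < p₃) (h₃ : p₃ < p₄)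
    (hL : p₄ < c.length) (hR₁ : Detour c R₁ p₁ p₃) (hR₂ : Detour c R₂ p₂ p₄)
    (h₁₂ : Disjoint R₁ R₂) : R₁.card + R₂.card < (p₂ - p₁) + (p₄ - p₃) := by
  have := ((Route.arc hc.1 h₂.le (by omega)).link hc.1 hR₁.symm
    (Route.wrap hc.1 (h₁.trans (h₂.trans h₃)) hL).symm (by simp [Finset.disjoint_left]; omega)
    (by simp)).card_add_card_le hc hR₂.symm (by simpa using h₁₂)
  omega

variable (hc : IsLongestCycle G c) (h₁ : p₁ < p₂) (h₂ : p₂ < p₃) (h₃ : p₃ < p₄) (h₄ : p₄ < p₅)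
  (h₅ : p₅ < p₆) (hL : p₆ < c.length) (h₁₂ : Disjoint R₁ R₂) (h₁₃ : Disjoint R₁ R₃)
  (h₂₃ : Disjoint R₂ R₃)
include hc h₁ h₂ h₃ h₄ h₅ hL h₁₂ h₁₃ h₂₃

lemma card_detours_13_25_46_lt (hR₁ : Detour c R₁ p₁ p₃) (hR₂ : Detour c R₂ p₂ p₅)
    (hR₃ : Detour c R₃ p₄ p₆) :
    R₁.card + R₂.card + R₃.card < (p₂ - p₁) + (p₄ - p₃) + (p₆ - p₅) := by
  have route := ((Route.arc hc.1 h₂.le (by omega)).link hc.1 hR₁.symm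
    (Route.wrap hc.1 (show p₁ < p₆ by omega) hL).symm (by simp [Finset.disjoint_left]; omega)
    (by simp)).link hc.1 hR₃.symm (Route.arc hc.1 h₄.le (by omega))
    (by simp [Finset.disjoint_left]; omega) (by simpa using h₁₃)
  have := route.card_add_card_le hc hR₂.symm
    (by simpa using Finset.disjoint_union_left.2 ⟨h₁₂, h₂₃.symm⟩)
  omega

lemma card_detours_15_24_36_lt (hR₁ : Detour c R₁ p₁ p₅) (hR₂ : Detour c R₂ p₂ p₄)
    (hR₃ : Detour c R₃ p₃ p₆) :
    R₁.card + R₂.card + R₃.card < (p₂ - p₁) + (p₄ - p₃) + (p₆ - p₅) := by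
  have route := ((Route.arc hc.1 h₂.le (by omega)).link hc.1 hR₃
    (Route.wrap hc.1 (show p₁ < p₆ by omega) hL) (by simp [Finset.disjoint_left]; omega)
    (by simp)).link hc.1 hR₁ (Route.arc hc.1 h₄.le (by omega)).symm
    (by simp [Finset.disjoint_left]; omega) (by simpa using h₁₃.symm)
  have := route.card_add_card_le hc hR₂.symm
    (by simpa using Finset.disjoint_union_left.2 ⟨h₂₃.symm, h₁₂⟩)
  omega

lemma card_detours_14_26_35_lt (hR₁ : Detour c R₁ p₁ p₄) (hR₂ : Detour c R₂ p₂ p₆)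
    (hR₃ : Detour c R₃ p₃ p₅) :
    R₁.card + R₂.card + R₃.card < (p₂ - p₁) + (p₄ - p₃) + (p₆ - p₅) := by
  have route := ((Route.arc hc.1 h₂.le (by omega)).link hc.1 hR₃
    (Route.arc hc.1 h₄.le (by omega)).symm (by simp [Finset.disjoint_left]; omega)
    (by simp)).link hc.1 hR₁.symm (Route.wrap hc.1 (show p₁ < p₆ by omega) hL).symm
    (by simp [Finset.disjoint_left]; omega) (by simpa using h₁₃.symm)
  have := route.card_add_card_le hc hR₂.symm
    (by simpa using Finset.disjoint_union_left.2 ⟨h₂₃.symm, h₁₂⟩)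
  omega

end LongestCycle

end Reroute

/-! ### Counting forks -/

section Forks

variable {ι : Type*} [Fintype ι] [DecidableEq ι] {w : ι → ℕ} {g : ι} {n : ℕ}

/-- The forks at `g`: the ordered pairs of two distinct indices other than `g`, both with the same
label as `g`. -/
def forks (w : ι → ℕ) (g : ι) : Finset (ι × ι) :=
  ({e | w e = w g ∧ e ≠ g} : Finset ι).offDiag

lemma mem_forks {F : ι × ι} :
    F ∈ forks w g ↔ (w F.1 = w g ∧ F.1 ≠ g) ∧ (w F.2 = w g ∧ F.2 ≠ g) ∧ F.1 ≠ F.2 := by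
  simp [forks, Finset.mem_offDiag]

lemma card_sq_le_card_forks (hn : 16 * n ≤ Fintype.card ι)
    (hg : Fintype.card ι ≤ 4 * n * ({e | w e = w g} : Finset ι).card) :
    Fintype.card ι ^ 2 ≤ 64 * n ^ 2 * (forks w g).card := by
  set d := ({e | w e = w g} : Finset ι).card
  have hcard : ({e | w e = w g ∧ e ≠ g} : Finset ι).card = d - 1 := by
    rw [Finset.filter_and_not, ← Finset.card_erase_of_mem (a := g) (by simp)]
    congr 1
    ext
    simp [and_comm]
  have hι : 0 < Fintype.card ι := Fintype.card_pos_iff.2 ⟨g⟩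
  have hd : 4 ≤ d := by
    have hn₀ : 0 < 4 * n := Nat.pos_of_mul_pos_right (hι.trans_le hg)
    exact Nat.le_of_mul_le_mul_left (by omega : 4 * n * 4 ≤ 4 * n * d) hn₀
  obtain ⟨c, hc⟩ := Nat.exists_eq_add_of_le' hd
  have hforks : (forks w g).card = (c + 3) * (c + 2) := by
    rw [forks, Finset.offDiag_card, hcard, hc, show c + 4 - 1 = c + 3 by omega]
    exact Nat.sub_eq_of_eq_add (by ring)
  calc Fintype.card ι ^ 2 ≤ (4 * n * d) ^ 2 := Nat.pow_le_pow_left hg 2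
    _ = 16 * n ^ 2 * (c + 4) ^ 2 := by rw [hc]; ring
    _ ≤ 16 * n ^ 2 * (4 * ((c + 3) * (c + 2))) := by gcongr; nlinarith
    _ = 64 * n ^ 2 * (forks w g).card := by rw [hforks]; ring

end Forks

lemma mul_card_small_fibers_le {ι : Type*} [Fintype ι] {w : ι → ℕ} {n : ℕ} (hw : ∀ e, w e < n)
    (c : ℕ) :
    c * ({g | c * n * ({e | w e = w g} : Finset ι).card < Fintype.card ι} : Finset ι).card ≤
      Fintype.card ι := by
  set B : Finset ι := {g | c * n * ({e | w e = w g} : Finset ι).card < Fintype.card ι}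
  have fiber_le : ∀ x ∈ Finset.range n, c * n * {g ∈ B | w g = x}.card ≤ Fintype.card ι := by
    intro x _
    rcases {g ∈ B | w g = x}.eq_empty_or_nonempty with h | ⟨g, hg⟩
    · simp [h]
    · obtain ⟨hgB, rfl⟩ := Finset.mem_filter.1 hg
      refine le_trans ?_ (Finset.mem_filter.1 hgB).2.le
      gcongr
      exact Finset.subset_univ B
  rcases isEmpty_or_nonempty ι with _ | ⟨⟨e⟩⟩
  · simp [B]
  refine Nat.le_of_mul_le_mul_left (?_ : n * _ ≤ n * _) (Nat.zero_lt_of_lt (hw e))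
  calc n * (c * B.card) = ∑ x ∈ Finset.range n, c * n * {g ∈ B | w g = x}.card := by
        rw [Finset.card_eq_sum_card_fiberwise (f := w) (t := Finset.range n)
          (fun e _ => by simp [hw]), ← Finset.mul_sum]
        ring
    _ ≤ ∑ _x ∈ Finset.range n, Fintype.card ι := Finset.sum_le_sum fiber_le
    _ = n * Fintype.card ι := by simp

/-! ### Bridges between two longest cycles -/

section Bridges

variable {V ι : Type*} {G : SimpleGraph V} {u v : V}

/-- Pairwise disjoint paths, indexed by `ι`, from a longest cycle `c₁` to a longest cycle `c₂`. Each
path meets `c₁` only in its first vertex `c₁.getVert (pos₁ e)`, meets `c₂` only in its last vertex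
`c₂.getVert (pos₂ e)`, and avoids the common vertices of the two cycles. -/
structure Bridges (c₁ : G.Walk u u) (c₂ : G.Walk v v) (ι : Type*) [DecidableEq V] where
  isLongestCycle₁ : IsLongestCycle G c₁
  isLongestCycle₂ : IsLongestCycle G c₂
  verts : ι → Finset V
  pos₁ : ι → ℕ
  pos₂ : ι → ℕ
  pos₁_lt : ∀ e, pos₁ e < c₁.length
  pos₂_lt : ∀ e, pos₂ e < c₂.length
  pathOn : ∀ e, PathOn G.Adj (verts e) (c₁.getVert (pos₁ e)) (c₂.getVert (pos₂ e))
  disjoint : Pairwise (Function.onFun Disjoint verts)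
  eq_start : ∀ e, ∀ z ∈ verts e, z ∈ c₁.support → z = c₁.getVert (pos₁ e)
  eq_end : ∀ e, ∀ z ∈ verts e, z ∈ c₂.support → z = c₂.getVert (pos₂ e)
  avoids : ∀ e, ∀ z ∈ verts e, z ∈ c₁.support → z ∉ c₂.support

variable [DecidableEq V] {c₁ : G.Walk u u} {c₂ : G.Walk v v}

/-- The label of position `i` of `c`: the number of vertices of `c'` among the positions `0, …, i`
of `c`. Removing the vertices of `c'` cuts `c` into segments, and positions of `c` with the same
label and not on `c'` lie in the same segment. -/
def segmentIndex (c : G.Walk u u) (c' : G.Walk v v) (i : ℕ) : ℕ :=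
  {j ∈ Finset.range (i + 1) | c.getVert j ∈ c'.support}.card

lemma segmentIndex_mono : Monotone (segmentIndex c₁ c₂) := fun i j hij =>
  Finset.card_le_card <| Finset.filter_subset_filter _ <| Finset.range_mono (by omega)

lemma segmentIndex_lt_segmentIndex {i j : ℕ} (hij : i < j) (hj : c₁.getVert j ∈ c₂.support) :
    segmentIndex c₁ c₂ i < segmentIndex c₁ c₂ j := by
  refine Finset.card_lt_card (Finset.ssubset_iff_of_subset ?_ |>.2 ⟨j, by simpa, by simp; omega⟩)
  exact Finset.filter_subset_filter _ (Finset.range_mono (by omega))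

lemma notMem_support_of_segmentIndex_eq {i j k : ℕ} (hij : i ≤ j) (hjk : j ≤ k)
    (h : segmentIndex c₁ c₂ i = segmentIndex c₁ c₂ k) (hi : c₁.getVert i ∉ c₂.support) :
    c₁.getVert j ∉ c₂.support := by
  intro hj
  rcases hij.eq_or_lt with rfl | hij
  · exact hi hj
  · have := segmentIndex_lt_segmentIndex hij hj
    have := segmentIndex_mono (c₁ := c₁) (c₂ := c₂) hjk
    omega

lemma segmentIndex_le_card_inter (hc : c₁.IsCycle) {i : ℕ} (hi : i < c₁.length) :
    segmentIndex c₁ c₂ i ≤ (c₁.support.toFinset ∩ c₂.support.toFinset).card := by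
  refine Finset.card_le_card_of_injOn c₁.getVert (fun j hj => ?_) fun a ha b hb => ?_
  · simp_all
  · simp only [Finset.coe_filter, Finset.mem_range, Set.mem_ofPred_eq] at ha hb
    exact getVert_inj_of_lt hc (by omega) (by omega)

namespace Bridges

/-- The bridges viewed as paths from `c₂` to `c₁`. -/
@[simps]
def swap (K : Bridges c₁ c₂ ι) : Bridges c₂ c₁ ι where
  isLongestCycle₁ := K.isLongestCycle₂
  isLongestCycle₂ := K.isLongestCycle₁
  verts := K.verts
  pos₁ := K.pos₂
  pos₂ := K.pos₁
  pos₁_lt := K.pos₂_lt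
  pos₂_lt := K.pos₁_lt
  pathOn e := (K.pathOn e).symm G.symm
  disjoint := K.disjoint
  eq_start := K.eq_end
  eq_end := K.eq_start
  avoids e z hz h₂ h₁ := K.avoids e z hz h₁ h₂

/-- The segment of `c₁` in which the bridge `e` starts. -/
def α (K : Bridges c₁ c₂ ι) (e : ι) : ℕ := segmentIndex c₁ c₂ (K.pos₁ e)

/-- The segment of `c₂` in which the bridge `e` ends. -/
def β (K : Bridges c₁ c₂ ι) (e : ι) : ℕ := segmentIndex c₂ c₁ (K.pos₂ e)

variable (K : Bridges c₁ c₂ ι)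

@[simp] lemma swap_α (e : ι) : K.swap.α e = K.β e := rfl

lemma α_lt (e : ι) :
    K.α e < (c₁.support.toFinset ∩ c₂.support.toFinset).card + 1 :=
  Nat.lt_succ_of_le (segmentIndex_le_card_inter K.isLongestCycle₁.1 (K.pos₁_lt e))

lemma β_lt (e : ι) :
    K.β e < (c₁.support.toFinset ∩ c₂.support.toFinset).card + 1 := by
  rw [Finset.inter_comm]
  exact K.swap.α_lt e

variable {K} {a b c d e f : ι}

lemma eq_of_mem_of_mem {z : V} (he : z ∈ K.verts e) (hf : z ∈ K.verts f) : e = f := by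
  by_contra h
  exact Finset.disjoint_left.1 (K.disjoint h) he hf

lemma pos₁_injective : Function.Injective K.pos₁ := fun e f h =>
  eq_of_mem_of_mem (K.pathOn e).start_mem (h ▸ (K.pathOn f).start_mem)

lemma pos₁_lt_of_α_lt (h : K.α e < K.α f) : K.pos₁ e < K.pos₁ f :=
  segmentIndex_mono.reflect_lt h

variable (K) in
/-- The vertices through which detours between bridges ending in segment `b` of `c₂` run: those of
the bridges themselves and those of the segment. -/
def territory (b : ℕ) : Set V :=
  {z | (∃ e, K.β e = b ∧ z ∈ K.verts e) ∨
    ∃ j < c₂.length, segmentIndex c₂ c₁ j = b ∧ c₂.getVert j = z}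

lemma disjoint_territory {b b' : ℕ} (h : b ≠ b') : Disjoint (K.territory b) (K.territory b') := by
  have key : ∀ (e : ι) j, j < c₂.length → c₂.getVert j ∈ K.verts e →
      segmentIndex c₂ c₁ j = K.β e := by
    intro e j hj hz
    have := K.eq_end e _ hz (c₂.getVert_mem_support j)
    rw [getVert_inj_of_lt K.isLongestCycle₂.1 hj (K.pos₂_lt e) this, β]
  refine Set.disjoint_left.2 ?_
  rintro z (⟨e, rfl, he⟩ | ⟨j, hj, rfl, rfl⟩) (⟨f, rfl, hf⟩ | ⟨i, hi, rfl, hij⟩)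
  · exact h (by rw [eq_of_mem_of_mem he hf])
  · exact h (key e i hi (hij ▸ he)).symm
  · exact h (key f j hj hf)
  · exact h (by rw [getVert_inj_of_lt K.isLongestCycle₂.1 hi hj hij])

variable (K) in
lemma getVert_pos₂_notMem (e : ι) : c₂.getVert (K.pos₂ e) ∉ c₁.support := fun h =>
  K.avoids e _ (K.pathOn e).end_mem h (c₂.getVert_mem_support _)

variable (K) in
lemma exists_off_pathOn (e : ι) : ∃ E g, G.Adj (c₁.getVert (K.pos₁ e)) g ∧
    PathOn G.Adj E g (c₂.getVert (K.pos₂ e)) ∧ ∀ z ∈ E, z ∈ K.verts e ∧ z ∉ c₁.support := by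
  obtain ⟨g, hg, hp⟩ := (K.pathOn e).exists_tail fun h =>
    K.getVert_pos₂_notMem e (h ▸ c₁.getVert_mem_support _)
  refine ⟨_, g, hg, hp, fun z hz => ?_⟩
  obtain ⟨hne, hz⟩ := Finset.mem_erase.1 hz
  exact ⟨hz, fun hzc => hne (K.eq_start e z hz hzc)⟩

-- The detour runs along the bridge `e`, the arc of `c₂` between the bridges, and back along `f`.
lemma exists_detour_of_le (hef : e ≠ f) (hβ : K.β e = K.β f) (hle : K.pos₂ e ≤ K.pos₂ f) :
    ∃ R, Detour c₁ R (K.pos₁ e) (K.pos₁ f) ∧ K.pos₂ f - K.pos₂ e < R.card ∧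
      (R : Set V) ⊆ K.territory (K.β e) := by
  obtain ⟨E, g, hg, pathE, hE⟩ := K.exists_off_pathOn e
  obtain ⟨F, g', hg', pathF, hF⟩ := K.exists_off_pathOn f
  obtain ⟨A, pathA, card_A, hA⟩ :
      ∃ A, PathOn G.Adj A (c₂.getVert (K.pos₂ e)) (c₂.getVert (K.pos₂ f)) ∧
        A.card = K.pos₂ f + 1 - K.pos₂ e ∧
        ∀ z ∈ A, ∃ j, (K.pos₂ e ≤ j ∧ j ≤ K.pos₂ f) ∧ c₂.getVert j = z := by
    have arc := Route.arc K.isLongestCycle₂.1 hle (K.pos₂_lt f)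
    exact ⟨_, arc.pathOn, arc.card_image_union K.isLongestCycle₂.1, by simp⟩
  have pathEA := pathE.join pathA fun z hzE hzA => by
    obtain ⟨j, -, rfl⟩ := hA z hzA
    exact K.eq_end e _ (hE _ hzE).1 (c₂.getVert_mem_support j)
  have path := pathEA.join (pathF.symm G.symm) fun z hz hzF => by
    rcases Finset.mem_union.1 hz with hzE | hzA
    · exact (hef (eq_of_mem_of_mem (hE z hzE).1 (hF z hzF).1)).elim
    · obtain ⟨j, -, rfl⟩ := hA z hzA
      exact K.eq_end f _ (hF _ hzF).1 (c₂.getVert_mem_support j)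
  refine ⟨E ∪ A ∪ F, ⟨fun z hz => ?_, g, g', hg, path, hg'.symm⟩, ?_, fun z hz => ?_⟩
  · rcases Finset.mem_union.1 hz with hz | hz
    · rcases Finset.mem_union.1 hz with hz | hz
      · exact (hE z hz).2
      · obtain ⟨j, ⟨hej, hjf⟩, rfl⟩ := hA z hz
        exact notMem_support_of_segmentIndex_eq hej hjf hβ (K.getVert_pos₂_notMem e)
    · exact (hF z hz).2
  · have : A.card ≤ (E ∪ A ∪ F).card :=
      Finset.card_le_card (Finset.subset_union_right.trans Finset.subset_union_left)
    omega
  · simp only [Finset.coe_union, Set.mem_union, Finset.mem_coe] at hz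
    rcases hz with (hz | hz) | hz
    · exact .inl ⟨e, rfl, (hE z hz).1⟩
    · obtain ⟨j, ⟨hej, hjf⟩, rfl⟩ := hA z hz
      exact .inr ⟨j, hjf.trans_lt (K.pos₂_lt f),
        le_antisymm ((segmentIndex_mono hjf).trans_eq hβ.symm) (segmentIndex_mono hej), rfl⟩
    · exact .inl ⟨f, hβ.symm, (hF z hz).1⟩

lemma exists_detour (hef : e ≠ f) (hβ : K.β e = K.β f) :
    ∃ R, Detour c₁ R (K.pos₁ e) (K.pos₁ f) ∧ Nat.dist (K.pos₂ e) (K.pos₂ f) < R.card ∧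
      (R : Set V) ⊆ K.territory (K.β e) := by
  rcases le_total (K.pos₂ e) (K.pos₂ f) with h | h
  · obtain ⟨R, hR, hcard, hsub⟩ := exists_detour_of_le hef hβ h
    exact ⟨R, hR, by rwa [Nat.dist_eq_sub_of_le h], hsub⟩
  · obtain ⟨R, hR, hcard, hsub⟩ := exists_detour_of_le hef.symm hβ.symm h
    exact ⟨R, hR.symm, by rwa [Nat.dist_eq_sub_of_le_right h], hβ ▸ hsub⟩

lemma disjoint_of_subset_territory {R R' : Finset V} {b b' : ℕ} (hR : (R : Set V) ⊆ K.territory b)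
    (hR' : (R' : Set V) ⊆ K.territory b') (h : b ≠ b') : Disjoint R R' :=
  Finset.disjoint_coe.1 ((disjoint_territory h).mono hR hR')

lemma dist_pos₂_lt_dist_pos₁ (hef : e ≠ f) (hβ : K.β e = K.β f) :
    Nat.dist (K.pos₂ e) (K.pos₂ f) < Nat.dist (K.pos₁ e) (K.pos₁ f) := by
  wlog h : K.pos₁ e < K.pos₁ f generalizing e f
  · rw [Nat.dist_comm, Nat.dist_comm (K.pos₁ e)]
    exact this hef.symm hβ.symm ((not_lt.1 h).lt_of_ne (pos₁_injective.ne hef.symm))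
  obtain ⟨R, hR, hcard, -⟩ := exists_detour hef hβ
  have := card_detour_12_lt K.isLongestCycle₁ h (K.pos₁_lt f) hR
  unfold Nat.dist at *
  omega

lemma eq_of_α_eq_of_β_eq (hα : K.α e = K.α f) (hβ : K.β e = K.β f) : e = f := by
  by_contra hef
  exact lt_asymm (dist_pos₂_lt_dist_pos₁ hef hβ) (dist_pos₂_lt_dist_pos₁ (K := K.swap) hef hα)

lemma eq_of_disjoint (K : Bridges c₁ c₂ ι) (h : Disjoint c₁.support.toFinset c₂.support.toFinset)
    (e f : ι) : e = f := by
  have hα := K.α_lt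
  have hβ := K.β_lt
  simp only [Finset.disjoint_iff_inter_eq_empty.1 h, Finset.card_empty, zero_add,
    Nat.lt_one_iff] at hα hβ
  exact eq_of_α_eq_of_β_eq ((hα e).trans (hα f).symm) ((hβ e).trans (hβ f).symm)

lemma α_ne_of_β_eq (hef : e ≠ f) (hβ : K.β e = K.β f) : K.α e ≠ K.α f :=
  fun hα => hef (eq_of_α_eq_of_β_eq hα hβ)

/-- Four bridges between two segments of `c₁`, containing the starts of `a, b` and of `c, d`, and
two segments of `c₂`, containing the ends of `a, c` and of `b, d`. -/
structure Square (K : Bridges c₁ c₂ ι) (a b c d : ι) : Prop where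
  α_ab : K.α a = K.α b
  α_cd : K.α c = K.α d
  β_ac : K.β a = K.β c
  β_bd : K.β b = K.β d
  α_ac : K.α a ≠ K.α c
  β_ab : K.β a ≠ K.β b

namespace Square

lemma swap (S : K.Square a b c d) : K.swap.Square a c b d :=
  ⟨S.β_ac, S.β_bd, S.α_ab, S.α_cd, S.β_ab, S.α_ac⟩

lemma flip_α (S : K.Square a b c d) : K.Square c d a b :=
  ⟨S.α_cd, S.α_ab, S.β_ac.symm, S.β_bd.symm, S.α_ac.symm, S.β_ac ▸ S.β_bd ▸ S.β_ab⟩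

lemma flip_β (S : K.Square a b c d) : K.Square b a d c :=
  S.swap.flip_α.swap

lemma pos₁_ne (S : K.Square a b c d) : K.pos₁ a ≠ K.pos₁ b :=
  pos₁_injective.ne fun h => S.β_ab (h ▸ rfl)

lemma dist_add_dist_lt (S : K.Square a b c d) (h : K.pos₁ a < K.pos₁ b ↔ K.pos₁ c < K.pos₁ d) :
    Nat.dist (K.pos₂ a) (K.pos₂ c) + Nat.dist (K.pos₂ b) (K.pos₂ d) <
      Nat.dist (K.pos₁ a) (K.pos₁ b) + Nat.dist (K.pos₁ c) (K.pos₁ d) := by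
  wlog hα : K.α a < K.α c generalizing a b c d
  · have := this S.flip_α h.symm ((not_lt.1 hα).lt_of_ne S.α_ac.symm)
    unfold Nat.dist at *
    omega
  wlog hab : K.pos₁ a < K.pos₁ b generalizing a b c d
  · have hba := (not_lt.1 hab).lt_of_ne S.pos₁_ne.symm
    have hdc := (not_lt.1 (mt h.2 hab)).lt_of_ne S.flip_α.pos₁_ne.symm
    have := this S.flip_β (by simp [hba, hdc]) (S.α_ab ▸ S.α_cd ▸ hα) hba
    unfold Nat.dist at *
    omega
  obtain ⟨R₁, hR₁, hcard₁, hsub₁⟩ := exists_detour (fun hac => S.α_ac (by rw [hac])) S.β_ac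
  obtain ⟨R₂, hR₂, hcard₂, hsub₂⟩ := exists_detour (fun hbd => S.flip_β.α_ac (by rw [hbd])) S.β_bd
  have := card_detours_13_24_lt K.isLongestCycle₁ hab (pos₁_lt_of_α_lt (S.α_ab ▸ hα)) (h.1 hab)
    (K.pos₁_lt d) hR₁ hR₂ (disjoint_of_subset_territory hsub₁ hsub₂ S.β_ab)
  unfold Nat.dist at *
  omega

lemma not_iff_and_iff (S : K.Square a b c d) : ¬((K.pos₁ a < K.pos₁ b ↔ K.pos₁ c < K.pos₁ d) ∧
    (K.pos₂ a < K.pos₂ c ↔ K.pos₂ b < K.pos₂ d)) := fun h =>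
  lt_asymm (S.dist_add_dist_lt h.1) (S.swap.dist_add_dist_lt h.2)

end Square

/-- The bridges `f₁` and `f₂` start in the same segment of `c₁`, and `fᵢ` ends in the same segment
of `c₂` as `gᵢ` but starts in another segment of `c₁`, such that the relative positions of `f₁` and
`g₁` agree with those of `f₂` and `g₂`. -/
structure Column (K : Bridges c₁ c₂ ι) (g₁ g₂ f₁ f₂ : ι) : Prop where
  α_eq : K.α f₁ = K.α f₂
  β_eq₁ : K.β f₁ = K.β g₁
  β_eq₂ : K.β f₂ = K.β g₂
  ne₁ : f₁ ≠ g₁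
  ne₂ : f₂ ≠ g₂
  pos₂_iff : K.pos₂ f₁ < K.pos₂ g₁ ↔ K.pos₂ f₂ < K.pos₂ g₂
  α_iff : K.α g₁ < K.α f₁ ↔ K.α g₂ < K.α f₂

variable {g₁ g₂ f₁ f₂ h₁ h₂ : ι}

lemma Column.symm (C : K.Column g₁ g₂ f₁ f₂) : K.Column g₂ g₁ f₂ f₁ :=
  ⟨C.α_eq.symm, C.β_eq₂, C.β_eq₁, C.ne₂, C.ne₁, C.pos₂_iff.symm, C.α_iff.symm⟩

lemma exists_detours_of_column (C : K.Column g₁ g₂ f₁ f₂) (D : K.swap.Column g₁ g₂ h₁ h₂)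
    (hα : K.α g₁ ≠ K.α g₂) (hβ : K.β g₁ ≠ K.β g₂) : ∃ R₁ R₂ R₃ : Finset V,
      (Detour c₁ R₁ (K.pos₁ f₁) (K.pos₁ g₁) ∧ Nat.dist (K.pos₂ f₁) (K.pos₂ g₁) < R₁.card) ∧
      (Detour c₁ R₂ (K.pos₁ f₂) (K.pos₁ g₂) ∧ Nat.dist (K.pos₂ f₂) (K.pos₂ g₂) < R₂.card) ∧
      (Detour c₁ R₃ (K.pos₁ h₁) (K.pos₁ h₂) ∧ Nat.dist (K.pos₂ h₁) (K.pos₂ h₂) < R₃.card) ∧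
      Disjoint R₁ R₂ ∧ Disjoint R₁ R₃ ∧ Disjoint R₂ R₃ := by
  have β_h : K.β h₁ = K.β h₂ := D.α_eq
  have β_hg₁ : K.β h₁ ≠ K.β g₁ := α_ne_of_β_eq (K := K.swap) D.ne₁ D.β_eq₁
  have β_hg₂ : K.β h₂ ≠ K.β g₂ := α_ne_of_β_eq (K := K.swap) D.ne₂ D.β_eq₂
  have ne_h : h₁ ≠ h₂ := fun h => hα (D.β_eq₁.symm.trans (h ▸ D.β_eq₂))
  obtain ⟨R₁, hR₁, hcard₁, hsub₁⟩ := exists_detour C.ne₁ C.β_eq₁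
  obtain ⟨R₂, hR₂, hcard₂, hsub₂⟩ := exists_detour C.ne₂ C.β_eq₂
  obtain ⟨R₃, hR₃, hcard₃, hsub₃⟩ := exists_detour ne_h β_h
  exact ⟨R₁, R₂, R₃, ⟨hR₁, hcard₁⟩, ⟨hR₂, hcard₂⟩, ⟨hR₃, hcard₃⟩,
    disjoint_of_subset_territory hsub₁ hsub₂ (C.β_eq₁ ▸ C.β_eq₂ ▸ hβ),
    disjoint_of_subset_territory hsub₁ hsub₃ (C.β_eq₁ ▸ β_hg₁.symm),
    disjoint_of_subset_territory hsub₂ hsub₃ (C.β_eq₂ ▸ β_h ▸ β_hg₂.symm)⟩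

lemma card_add_card_lt_of_column (C : K.Column g₁ g₂ f₁ f₂) (D : K.swap.Column g₁ g₂ h₁ h₂)
    (hg : K.α g₁ < K.α g₂) (hf : K.pos₁ f₁ < K.pos₁ f₂) {R₁ R₂ R₃ : Finset V}
    (hR₁ : Detour c₁ R₁ (K.pos₁ f₁) (K.pos₁ g₁)) (hR₂ : Detour c₁ R₂ (K.pos₁ f₂) (K.pos₁ g₂))
    (hR₃ : Detour c₁ R₃ (K.pos₁ h₁) (K.pos₁ h₂)) (h₁₂ : Disjoint R₁ R₂) (h₁₃ : Disjoint R₁ R₃)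
    (h₂₃ : Disjoint R₂ R₃) : R₁.card + R₂.card + R₃.card <
      Nat.dist (K.pos₁ f₁) (K.pos₁ f₂) + Nat.dist (K.pos₁ g₁) (K.pos₁ h₁) +
        Nat.dist (K.pos₁ g₂) (K.pos₁ h₂) := by
  have hc := K.isLongestCycle₁
  have α_f : K.α f₁ = K.α f₂ := C.α_eq
  have α_h₁ : K.α h₁ = K.α g₁ := D.β_eq₁
  have α_h₂ : K.α h₂ = K.α g₂ := D.β_eq₂
  have α_iff := C.α_iff
  have pos_h₁ : K.pos₁ g₁ ≠ K.pos₁ h₁ := pos₁_injective.ne D.ne₁.symm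
  have pos_h₂ : K.pos₁ g₂ ≠ K.pos₁ h₂ := pos₁_injective.ne D.ne₂.symm
  have pos_iff : K.pos₁ h₁ < K.pos₁ g₁ ↔ K.pos₁ h₂ < K.pos₁ g₂ := D.pos₂_iff
  simp only [Nat.dist]
  rcases lt_or_gt_of_ne (α_ne_of_β_eq C.ne₁ C.β_eq₁) with hfg | hfg <;>
    rcases lt_or_gt_of_ne pos_h₁ with hgh | hgh
  · have := card_detours_13_25_46_lt hc hf (pos₁_lt_of_α_lt (by omega)) hgh
      (pos₁_lt_of_α_lt (by omega)) (show K.pos₁ g₂ < K.pos₁ h₂ by omega) (K.pos₁_lt _)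
      h₁₂ h₁₃ h₂₃ hR₁ hR₂ hR₃
    omega
  · have := card_detours_14_26_35_lt hc hf (pos₁_lt_of_α_lt (by omega)) hgh
      (pos₁_lt_of_α_lt (by omega)) (show K.pos₁ h₂ < K.pos₁ g₂ by omega) (K.pos₁_lt _)
      h₁₂ h₁₃ h₂₃ hR₁ hR₂ hR₃
    omega
  · have := card_detours_15_24_36_lt hc hgh (pos₁_lt_of_α_lt (by omega))
      (show K.pos₁ g₂ < K.pos₁ h₂ by omega) (pos₁_lt_of_α_lt (by omega)) hf (K.pos₁_lt _)
      h₁₃ h₁₂ h₂₃.symm hR₁.symm hR₃ hR₂.symm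
    omega
  · have := card_detours_13_25_46_lt hc hgh (pos₁_lt_of_α_lt (by omega))
      (show K.pos₁ h₂ < K.pos₁ g₂ by omega) (pos₁_lt_of_α_lt (by omega)) hf (K.pos₁_lt _)
      h₁₃.symm h₂₃.symm h₁₂ hR₃ hR₁.symm hR₂.symm
    omega

-- The bridges `f₁, f₂, g₂, h₂, h₁, g₁` form a hexagon on three segments of each cycle.
lemma dist_add_dist_lt_of_column (C : K.Column g₁ g₂ f₁ f₂) (D : K.swap.Column g₁ g₂ h₁ h₂)
    (hα : K.α g₁ ≠ K.α g₂) (hβ : K.β g₁ ≠ K.β g₂)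
    (h : K.pos₁ f₁ < K.pos₁ f₂ ↔ K.α g₁ < K.α g₂) :
    Nat.dist (K.pos₂ f₁) (K.pos₂ g₁) + Nat.dist (K.pos₂ f₂) (K.pos₂ g₂) +
        Nat.dist (K.pos₂ h₁) (K.pos₂ h₂) <
      Nat.dist (K.pos₁ f₁) (K.pos₁ f₂) + Nat.dist (K.pos₁ g₁) (K.pos₁ h₁) +
        Nat.dist (K.pos₁ g₂) (K.pos₁ h₂) := by
  wlog hf : K.pos₁ f₁ < K.pos₁ f₂ generalizing f₁ f₂ g₁ g₂ h₁ h₂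
  · have hne : K.pos₁ f₁ ≠ K.pos₁ f₂ := pos₁_injective.ne fun hf => hβ <| by
      rw [← C.β_eq₁, ← C.β_eq₂, hf]
    have := this C.symm D.symm hα.symm hβ.symm (by omega) (by omega)
    unfold Nat.dist at *
    omega
  obtain ⟨R₁, R₂, R₃, ⟨hR₁, hcard₁⟩, ⟨hR₂, hcard₂⟩, ⟨hR₃, hcard₃⟩, h₁₂, h₁₃, h₂₃⟩ :=
    exists_detours_of_column C D hα hβ
  have := card_add_card_lt_of_column C D (h.1 hf) hf hR₁ hR₂ hR₃ h₁₂ h₁₃ h₂₃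
  omega

lemma not_iff_and_iff_of_column (C : K.Column g₁ g₂ f₁ f₂) (D : K.swap.Column g₁ g₂ h₁ h₂)
    (hα : K.α g₁ ≠ K.α g₂) (hβ : K.β g₁ ≠ K.β g₂) :
    ¬((K.pos₁ f₁ < K.pos₁ f₂ ↔ K.α g₁ < K.α g₂) ∧
      (K.pos₂ h₁ < K.pos₂ h₂ ↔ K.β g₁ < K.β g₂)) := by
  rintro ⟨h, h'⟩
  have lt₂₁ := dist_add_dist_lt_of_column C D hα hβ h
  have lt₁₂ := dist_add_dist_lt_of_column (K := K.swap) D C hβ hα h'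
  simp only [swap_pos₁, swap_pos₂] at lt₁₂
  unfold Nat.dist at *
  omega

lemma Column.eq_of_base_eq {g : ι} (C : K.Column g g f₁ f₂) : f₁ = f₂ :=
  eq_of_α_eq_of_β_eq C.α_eq (C.β_eq₁.trans C.β_eq₂.symm)

/-- Two pairs of bridges `F₁` and `F₂` which form two columns over `g₁, g₂` and are ordered in the
same way along `c₂`. -/
structure ForkMatch (K : Bridges c₁ c₂ ι) (g₁ g₂ : ι) (F₁ F₂ : ι × ι) : Prop where
  fst : K.Column g₁ g₂ F₁.1 F₂.1
  snd : K.Column g₁ g₂ F₁.2 F₂.2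
  ne : F₁.1 ≠ F₁.2
  pos₂_iff : K.pos₂ F₁.1 < K.pos₂ F₁.2 ↔ K.pos₂ F₂.1 < K.pos₂ F₂.2

namespace ForkMatch

variable {F₁ F₂ H₁ H₂ : ι × ι}

lemma not_pos₁_iff (M : K.ForkMatch g₁ g₂ F₁ F₂) (hβ : K.β g₁ ≠ K.β g₂) :
    ¬(K.pos₁ F₁.1 < K.pos₁ F₂.1 ↔ K.pos₁ F₁.2 < K.pos₁ F₂.2) := fun h =>
  have S : K.Square F₁.1 F₂.1 F₁.2 F₂.2 :=
    { α_ab := M.fst.α_eq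
      α_cd := M.snd.α_eq
      β_ac := M.fst.β_eq₁.trans M.snd.β_eq₁.symm
      β_bd := M.fst.β_eq₂.trans M.snd.β_eq₂.symm
      α_ac := α_ne_of_β_eq M.ne (M.fst.β_eq₁.trans M.snd.β_eq₁.symm)
      β_ab := M.fst.β_eq₁ ▸ M.fst.β_eq₂ ▸ hβ }
  S.not_iff_and_iff ⟨h, M.pos₂_iff⟩

lemma exists_column (M : K.ForkMatch g₁ g₂ F₁ F₂) (hβ : K.β g₁ ≠ K.β g₂) (A : Prop) :
    ∃ f₁ f₂, K.Column g₁ g₂ f₁ f₂ ∧ (K.pos₁ f₁ < K.pos₁ f₂ ↔ A) := by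
  by_cases h : K.pos₁ F₁.1 < K.pos₁ F₂.1 ↔ A
  · exact ⟨_, _, M.fst, h⟩
  · exact ⟨_, _, M.snd, by have := M.not_pos₁_iff hβ; tauto⟩

lemma β_eq_of_α_eq (M : K.ForkMatch g₁ g₂ F₁ F₂) (hα : K.α g₁ = K.α g₂) : K.β g₁ = K.β g₂ := by
  by_contra hβ
  obtain ⟨f₁, f₂, C, h⟩ := M.exists_column hβ (K.pos₁ g₁ < K.pos₁ g₂)
  have S : K.Square f₁ f₂ g₁ g₂ :=
    ⟨C.α_eq, hα, C.β_eq₁, C.β_eq₂, α_ne_of_β_eq C.ne₁ C.β_eq₁, C.β_eq₁ ▸ C.β_eq₂ ▸ hβ⟩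
  exact S.not_iff_and_iff ⟨h, C.pos₂_iff⟩

lemma base_eq (M : K.ForkMatch g₁ g₂ F₁ F₂) (N : K.swap.ForkMatch g₁ g₂ H₁ H₂) : g₁ = g₂ := by
  by_cases hα : K.α g₁ = K.α g₂
  · exact eq_of_α_eq_of_β_eq hα (M.β_eq_of_α_eq hα)
  by_cases hβ : K.β g₁ = K.β g₂
  · exact absurd (N.β_eq_of_α_eq hβ) hα
  obtain ⟨f₁, f₂, C, hf⟩ := M.exists_column hβ (K.α g₁ < K.α g₂)
  obtain ⟨h₁, h₂, D, hh⟩ := N.exists_column hα (K.β g₁ < K.β g₂)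
  exact (not_iff_and_iff_of_column C D hα hβ ⟨hf, hh⟩).elim

lemma fork_eq {g : ι} (M : K.ForkMatch g g F₁ F₂) : F₁ = F₂ :=
  Prod.ext M.fst.eq_of_base_eq M.snd.eq_of_base_eq

end ForkMatch

/-- The fork `F` up to `ForkMatch`: the segments of `c₁` it starts in, and the relative positions of
`F.1`, `F.2` and `g`. -/
def forkCode (K : Bridges c₁ c₂ ι) (g : ι) (F : ι × ι) :
    (ℕ × ℕ) × (Bool × Bool × Bool × Bool × Bool) :=
  ((K.α F.1, K.α F.2),
    (K.pos₂ F.1 < K.pos₂ F.2, K.pos₂ F.1 < K.pos₂ g, K.pos₂ F.2 < K.pos₂ g, K.α g < K.α F.1,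
      K.α g < K.α F.2))

variable [Fintype ι]

lemma forkMatch_of_forkCode_eq [DecidableEq ι] {F₁ F₂ : ι × ι} (hF₁ : F₁ ∈ forks K.β g₁)
    (hF₂ : F₂ ∈ forks K.β g₂)
    (h : K.forkCode g₁ F₁ = K.forkCode g₂ F₂) : K.ForkMatch g₁ g₂ F₁ F₂ := by
  obtain ⟨⟨β₁, ne₁⟩, ⟨β₁', ne₁'⟩, ne⟩ := mem_forks.1 hF₁
  obtain ⟨⟨β₂, ne₂⟩, ⟨β₂', ne₂'⟩, -⟩ := mem_forks.1 hF₂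
  simp only [forkCode, Prod.mk.injEq, decide_eq_decide] at h
  obtain ⟨⟨α_eq, α_eq'⟩, pos_iff, pos_iff₁, pos_iff₂, α_iff, α_iff'⟩ := h
  exact ⟨⟨α_eq, β₁, β₂, ne₁, ne₂, pos_iff₁, α_iff⟩,
    ⟨α_eq', β₁', β₂', ne₁', ne₂', pos_iff₂, α_iff'⟩, ne, pos_iff⟩

lemma sum_card_forks_mul_card_forks_le [DecidableEq ι] {n : ℕ} (hα : ∀ e, K.α e < n)
    (hβ : ∀ e, K.β e < n) :
    ∑ g, (forks K.β g).card * (forks K.α g).card ≤ 2 ^ 10 * n ^ 4 := by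
  let tuples : Finset (Σ _ : ι, (ι × ι) × (ι × ι)) :=
    Finset.univ.sigma fun g => forks K.β g ×ˢ forks K.α g
  let codes : Finset ((ℕ × ℕ) × (Bool × Bool × Bool × Bool × Bool)) :=
    (Finset.range n ×ˢ Finset.range n) ×ˢ Finset.univ
  let code (x : Σ _ : ι, (ι × ι) × (ι × ι)) := (K.forkCode x.1 x.2.1, K.swap.forkCode x.1 x.2.2)
  have maps : ∀ x ∈ tuples, code x ∈ codes ×ˢ codes := fun x _ => by
    simp [code, codes, forkCode, hα, hβ]
  have inj : Set.InjOn code tuples := by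
    rintro ⟨g₁, F₁, H₁⟩ hx₁ ⟨g₂, F₂, H₂⟩ hx₂ h
    obtain ⟨hF₁, hH₁⟩ := by simpa [tuples] using hx₁
    obtain ⟨hF₂, hH₂⟩ := by simpa [tuples] using hx₂
    obtain ⟨hF, hH⟩ := Prod.mk.injEq .. ▸ h
    have M := forkMatch_of_forkCode_eq hF₁ hF₂ hF
    have N : K.swap.ForkMatch g₁ g₂ H₁ H₂ := forkMatch_of_forkCode_eq hH₁ hH₂ hH
    obtain rfl := M.base_eq N
    rw [M.fork_eq, N.fork_eq]
  calc ∑ g, (forks K.β g).card * (forks K.α g).card = tuples.card := by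
        simp [tuples, Finset.card_sigma]
    _ ≤ (codes ×ˢ codes).card := Finset.card_le_card_of_injOn code maps inj
    _ = 2 ^ 10 * n ^ 4 := by
        simp only [codes, Finset.card_product, Finset.card_range, Finset.card_univ,
          Fintype.card_prod, Fintype.card_bool]
        ring

lemma card_pow_four_le [DecidableEq ι] {g : ι} {n : ℕ} (hn : 16 * n ≤ Fintype.card ι)
    (hα : Fintype.card ι ≤ 4 * n * ({e | K.α e = K.α g} : Finset ι).card)
    (hβ : Fintype.card ι ≤ 4 * n * ({e | K.β e = K.β g} : Finset ι).card) :
    Fintype.card ι ^ 4 ≤ 2 ^ 12 * n ^ 4 * ((forks K.β g).card * (forks K.α g).card) := calc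
  _ = Fintype.card ι ^ 2 * Fintype.card ι ^ 2 := by ring
  _ ≤ (64 * n ^ 2 * (forks K.β g).card) * (64 * n ^ 2 * (forks K.α g).card) :=
    Nat.mul_le_mul (card_sq_le_card_forks hn hβ) (card_sq_le_card_forks hn hα)
  _ = _ := by ring

lemma card_pow_five_le {n : ℕ} (hα : ∀ e, K.α e < n) (hβ : ∀ e, K.β e < n) :
    Fintype.card ι ^ 5 ≤ 2 ^ 23 * n ^ 8 := by
  classical
  set m := Fintype.card ι with hm
  rcases lt_or_ge m (16 * n) with h | h
  · calc m ^ 5 ≤ (16 * n) ^ 5 := Nat.pow_le_pow_left h.le 5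
      _ = 2 ^ 20 * n ^ 5 := by ring
      _ ≤ 2 ^ 23 * n ^ 8 :=
        Nat.mul_le_mul (by norm_num) (Nat.pow_le_pow_right (by omega) (by norm_num))
  · let B₁ : Finset ι := {g | 4 * n * ({e | K.α e = K.α g} : Finset ι).card < m}
    let B₂ : Finset ι := {g | 4 * n * ({e | K.β e = K.β g} : Finset ι).card < m}
    have card_good : m ≤ 2 * (B₁ ∪ B₂)ᶜ.card := by
      have hB₁ : 4 * B₁.card ≤ m := mul_card_small_fibers_le hα 4
      have hB₂ : 4 * B₂.card ≤ m := mul_card_small_fibers_le hβ 4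
      have := Finset.card_union_le B₁ B₂
      have := Finset.card_compl_add_card (B₁ ∪ B₂)
      omega
    have good : ∀ g ∈ (B₁ ∪ B₂)ᶜ,
        m ^ 4 ≤ 2 ^ 12 * n ^ 4 * ((forks K.β g).card * (forks K.α g).card) := by
      intro g hg
      simp only [B₁, B₂, Finset.mem_compl, Finset.mem_union, Finset.mem_filter, Finset.mem_univ,
        true_and, not_or, not_lt] at hg
      exact card_pow_four_le h hg.1 hg.2
    calc m ^ 5 = m * m ^ 4 := by ring
      _ ≤ 2 * (B₁ ∪ B₂)ᶜ.card * m ^ 4 := Nat.mul_le_mul_right _ card_good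
      _ = 2 * ∑ g ∈ (B₁ ∪ B₂)ᶜ, m ^ 4 := by simp [mul_assoc]
      _ ≤ 2 * ∑ g ∈ (B₁ ∪ B₂)ᶜ,
          2 ^ 12 * n ^ 4 * ((forks K.β g).card * (forks K.α g).card) := by
        gcongr with g hg
        exact good g hg
      _ ≤ 2 * ∑ g, 2 ^ 12 * n ^ 4 * ((forks K.β g).card * (forks K.α g).card) := by
        gcongr
        exact Finset.subset_univ _
      _ ≤ 2 * (2 ^ 12 * n ^ 4 * (2 ^ 10 * n ^ 4)) := by
        rw [← Finset.mul_sum]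
        gcongr
        exact sum_card_forks_mul_card_forks_le hα hβ
      _ = 2 ^ 23 * n ^ 8 := by ring

end Bridges

lemma nonempty_bridges (h₁ : IsLongestCycle G c₁) (h₂ : IsLongestCycle G c₂) {P : ι → Finset V}
    (hP : IsLinkage G.Adj c₁.support.toFinset c₂.support.toFinset P) :
    Nonempty (Bridges c₁ c₂ {i // Disjoint (P i) (c₁.support.toFinset ∩ c₂.support.toFinset)}) := by
  choose s hs t ht hPst using hP.pathOn
  choose W hW x y hWxy hx hy eq_x eq_y using fun i => (hPst i).exists_trim (hs i) (ht i)
  choose p hp hpx using fun i => exists_getVert_lt h₁.1 (List.mem_toFinset.1 (hx i))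
  choose q hq hqy using fun i => exists_getVert_lt h₂.1 (List.mem_toFinset.1 (hy i))
  exact ⟨{
    isLongestCycle₁ := h₁
    isLongestCycle₂ := h₂
    verts i := W i
    pos₁ i := p i
    pos₂ i := q i
    pos₁_lt i := hp i
    pos₂_lt i := hq i
    pathOn i := by rw [hpx, hqy]; exact hWxy i
    disjoint i j hij := (hP.disjoint (Subtype.coe_injective.ne hij)).mono (hW i) (hW j)
    eq_start i z hz hz₁ := by rw [hpx]; exact eq_x i z hz (List.mem_toFinset.2 hz₁)
    eq_end i z hz hz₂ := by rw [hqy]; exact eq_y i z hz (List.mem_toFinset.2 hz₂)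
    avoids i z hz hz₁ hz₂ := Finset.disjoint_left.1 i.2 (hW i hz) (by simp [hz₁, hz₂]) }⟩

end Bridges

/-! ### Longest cycles and separators -/

section Linkages

variable {V ι : Type*} [DecidableEq V] [Fintype ι] {G : SimpleGraph V} {u v : V} {c₁ : G.Walk u u}
  {c₂ : G.Walk v v} {P : ι → Finset V}

lemma card_le_card_add_card_disjoint (hP : Pairwise (Function.onFun Disjoint P)) (X : Finset V) :
    Fintype.card ι ≤ X.card + Fintype.card {i // Disjoint (P i) X} := by
  have hmeet : Fintype.card {i // ¬Disjoint (P i) X} ≤ X.card := by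
    choose x hxP hxX using fun i : {i // ¬Disjoint (P i) X} => Finset.not_disjoint_iff.1 i.2
    rw [← Fintype.card_coe X]
    refine Fintype.card_le_of_injective (fun i => ⟨x i, hxX i⟩) fun i j hij => Subtype.ext ?_
    refine hP.eq (Finset.not_disjoint_iff.2 ⟨x i, hxP i, ?_⟩)
    rw [show x i = x j by simpa using hij]
    exact hxP j
  rw [Fintype.card_subtype_compl] at hmeet
  omega

lemma card_le_one_of_isLinkage (h₁ : IsLongestCycle G c₁) (h₂ : IsLongestCycle G c₂)
    (hP : IsLinkage G.Adj c₁.support.toFinset c₂.support.toFinset P)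
    (h : Disjoint c₁.support.toFinset c₂.support.toFinset) : Fintype.card ι ≤ 1 := by
  obtain ⟨K⟩ := nonempty_bridges h₁ h₂ hP
  have hX := card_le_card_add_card_disjoint hP.disjoint (c₁.support.toFinset ∩ c₂.support.toFinset)
  have := Fintype.card_le_one_iff.2 (K.eq_of_disjoint h)
  rw [Finset.disjoint_iff_inter_eq_empty.1 h] at *
  simpa using hX.trans (by simpa)

lemma le_mul_rpow_of_pow_five_le {N k m : ℕ} (hk : 0 < k) (hN : N ≤ k + m)
    (hm : m ^ 5 ≤ 2 ^ 23 * (k + 1) ^ 8) : (N : ℝ) ≤ 100 * (k : ℝ) ^ ((8 : ℝ) / 5) := by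
  set r := (k : ℝ) ^ ((8 : ℝ) / 5) with hr
  have hkr : (k : ℝ) ≤ r :=
    Real.self_le_rpow_of_one_le (by exact_mod_cast hk) (by norm_num)
  have hr5 : r ^ 5 = (k : ℝ) ^ 8 := by
    rw [hr, ← Real.rpow_mul_natCast (by positivity), ← Real.rpow_natCast]
    norm_num
  have hmk : m ^ 5 ≤ 2 ^ 31 * k ^ 8 := calc
    m ^ 5 ≤ 2 ^ 23 * (k + 1) ^ 8 := hm
    _ ≤ 2 ^ 23 * (2 * k) ^ 8 := by gcongr; omega
    _ = 2 ^ 31 * k ^ 8 := by ring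
  have hmr : (m : ℝ) ≤ 99 * r := by
    refine le_of_pow_le_pow_left₀ (n := 5) (by norm_num) (by positivity) ?_
    calc (m : ℝ) ^ 5 ≤ 2 ^ 31 * (k : ℝ) ^ 8 := by exact_mod_cast hmk
      _ ≤ 99 ^ 5 * (k : ℝ) ^ 8 := by gcongr; norm_num
      _ = (99 * r) ^ 5 := by rw [mul_pow, hr5]
  calc (N : ℝ) ≤ k + m := by exact_mod_cast hN
    _ ≤ r + 99 * r := add_le_add hkr hmr
    _ = 100 * r := by ring

theorem card_le_of_isLinkage (h₁ : IsLongestCycle G c₁) (h₂ : IsLongestCycle G c₂)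
    (hP : IsLinkage G.Adj c₁.support.toFinset c₂.support.toFinset P)
    (h : (c₁.support.toFinset ∩ c₂.support.toFinset).Nonempty) :
    (Fintype.card ι : ℝ) ≤
      100 * ((c₁.support.toFinset ∩ c₂.support.toFinset).card : ℝ) ^ ((8 : ℝ) / 5) := by
  obtain ⟨K⟩ := nonempty_bridges h₁ h₂ hP
  exact le_mul_rpow_of_pow_five_le h.card_pos (card_le_card_add_card_disjoint hP.disjoint _)
    (Bridges.card_pow_five_le K.α_lt K.β_lt)

end Linkages

section TwoConnected

variable {V : Type*} [DecidableEq V] {G : SimpleGraph V}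

lemma exists_pathOn_of_mem_support {s t x y : V} {p : G.Walk s t} (hx : x ∈ p.support)
    (hy : y ∈ p.support) : ∃ W ⊆ p.support.toFinset, PathOn G.Adj W x y := by
  let q : G.Walk x y := (p.takeUntil x hx).reverse.append (p.takeUntil y hy)
  refine ⟨_, fun z hz => ?_, PathOn.of_isPath q.bypass_isPath⟩
  have hzq : z ∈ q.support := q.support_bypass_subset_support (List.mem_toFinset.1 hz)
  rw [Walk.mem_support_append_iff, Walk.support_reverse, List.mem_reverse] at hzq
  exact List.mem_toFinset.2 (hzq.elim (p.support_takeUntil_subset_support hx ·)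
    (p.support_takeUntil_subset_support hy ·))

lemma Separates.one_lt_card {A B S : Finset V}
    (hG : ∀ w : V, (G.induce ({w}ᶜ : Set V)).Connected) (hA : 1 < A.card) (hB : 1 < B.card)
    (hS : Separates G.Adj A B S) : 1 < S.card := by
  by_contra! hcard
  have : Nonempty V := ⟨(Finset.card_pos.1 (by omega : 0 < A.card)).choose⟩
  obtain ⟨w, hw⟩ := Finset.card_le_one_iff_subset_singleton.1 hcard
  obtain ⟨a, ha, haw⟩ := Finset.exists_mem_ne hA w
  obtain ⟨b, hb, hbw⟩ := Finset.exists_mem_ne hB w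
  obtain ⟨p⟩ := (hG w).preconnected ⟨a, haw⟩ ⟨b, hbw⟩
  let q : G.Walk a b := p.map (Embedding.induce ({w}ᶜ : Set V)).toHom
  obtain ⟨W, hW, hWab⟩ := exists_pathOn_of_mem_support q.start_mem_support q.end_mem_support
  obtain ⟨z, hz, hzS⟩ := hS hWab ha hb
  have hzq : z ∈ p.support.map (Embedding.induce ({w}ᶜ : Set V)).toHom :=
    Walk.support_map _ p ▸ List.mem_toFinset.1 (hW hz)
  obtain ⟨y, -, hyz⟩ := List.mem_map.1 hzq
  exact y.2 (hyz.trans (Finset.mem_singleton.1 (hw hzS)))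

lemma one_lt_card_support_of_isCycle {u : V} {c : G.Walk u u} (hc : c.IsCycle) :
    1 < c.support.toFinset.card :=
  Finset.one_lt_card.2 ⟨c.getVert 0, by simp, c.getVert 1, by simp, fun h => by
    have := hc.three_le_length
    have := getVert_inj_of_lt hc (by omega) (by omega) h
    omega⟩

theorem IsLongestCycle.inter_nonempty [Finite V]
    (hG : ∀ w : V, (G.induce ({w}ᶜ : Set V)).Connected) {u v : V} {c₁ : G.Walk u u}
    {c₂ : G.Walk v v} (h₁ : IsLongestCycle G c₁) (h₂ : IsLongestCycle G c₂) :
    (c₁.support.toFinset ∩ c₂.support.toFinset).Nonempty := by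
  by_contra! h
  obtain ⟨S, hS, P, hP⟩ := exists_separates_and_isLinkage (r := G.Adj) (Set.toFinite _)
    c₁.support.toFinset c₂.support.toFinset
  have two_paths : 1 < S.card := hS.one_lt_card hG (one_lt_card_support_of_isCycle h₁.1)
    (one_lt_card_support_of_isCycle h₂.1)
  have one_path := card_le_one_of_isLinkage h₁ h₂ hP (Finset.disjoint_iff_inter_eq_empty.2 h)
  rw [Fintype.card_fin] at one_path
  omega

theorem exists_mem_support_of_separates [Finite V]
    (hG : ∀ w : V, (G.induce ({w}ᶜ : Set V)).Connected) {u v w : V} {c₁ : G.Walk u u}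
    {c₂ : G.Walk v v} {c : G.Walk w w} (h₁ : IsLongestCycle G c₁) (h₂ : IsLongestCycle G c₂)
    (hc : IsLongestCycle G c) {T : Finset V}
    (hT : Separates G.Adj c₁.support.toFinset c₂.support.toFinset T) :
    ∃ x ∈ T, x ∈ c.support := by
  obtain ⟨x, hx⟩ := h₁.inter_nonempty hG hc
  obtain ⟨y, hy⟩ := h₂.inter_nonempty hG hc
  rw [Finset.mem_inter, List.mem_toFinset (l := c.support)] at hx hy
  obtain ⟨W, hW, hWxy⟩ := exists_pathOn_of_mem_support hx.2 hy.2
  obtain ⟨z, hz, hzT⟩ := hT hWxy hx.1 hy.1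
  exact ⟨z, hzT, List.mem_toFinset.1 (hW hz)⟩

end TwoConnected

theorem longest_cycle_transversal_bound :
    ∃ C : ℝ, 0 < C ∧
      ∀ (V : Type) [Fintype V] [DecidableEq V] (G : SimpleGraph V),
        -- `G` is 2-connected:
        2 < Fintype.card V →
        (∀ w : V, (G.induce ({w}ᶜ : Set V)).Connected) →
        ∀ (u v : V) (c1 : G.Walk u u) (c2 : G.Walk v v),
          IsLongestCycle G c1 → IsLongestCycle G c2 →
          ∀ k : ℕ, k = (c1.support.toFinset ∩ c2.support.toFinset).card →
          ∃ T : Finset V, (T.card : ℝ) ≤ C * (k : ℝ) ^ ((8 : ℝ) / 5) ∧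
            ∀ (w : V) (c : G.Walk w w), IsLongestCycle G c → ∃ x ∈ T, x ∈ c.support := by
  refine ⟨100, by norm_num, ?_⟩
  rintro V _ _ G - hG u v c1 c2 h1 h2 k rfl
  obtain ⟨T, hT, P, hP⟩ := exists_separates_and_isLinkage (r := G.Adj) (Set.toFinite _)
    c1.support.toFinset c2.support.toFinset
  refine ⟨T, ?_, fun w c hc => exists_mem_support_of_separates hG h1 h2 hc hT⟩
  simpa using card_le_of_isLinkage h1 h2 hP (h1.inter_nonempty hG h2)
end

section
/- Let C1 and C2 be two longest cycles in a finite simple graph G, let x be the vertex set of a connected component of the graph obtained from C1 by deleting the vertices of C2, and let y be the vertex set of a connected component of the graph obtained from C2 by deleting the vertices of C1. Then there do not exist two paths P and P' in G such that: P and P' are vertex-disjoint from each other; each of P and P' has one endpoint in x and the other endpoint in y; and no internal vertex of P or P' lies in V(C1) ∪ V(C2). -/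
open SimpleGraph

/-! Rerouting along the two linking paths `P`, `P'` gives two cycles. A component of `C₁ - V(C₂)`
contains one of the two arcs of `C₁` between the ends of `P` and `P'` in it, because otherwise a
missing vertex on each arc would separate these ends; call that arc `Q` and the other one `Q'`, and
define the arcs `R`, `R'` of `C₂` likewise. Then `Q ∪ P' ∪ R' ∪ P` and `Q' ∪ P' ∪ R ∪ P` are cycles
of total length `|C₁| + |C₂| + 2|P| + 2|P'|`, so one of them is longer than the average of `|C₁|`
and `|C₂|`. -/

section Walks

variable {V : Type*} {G : SimpleGraph V} {s t u v w : V}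

lemma notMem_tail_support_of_isPath {p : G.Walk u v} (hp : p.IsPath) : u ∉ p.support.tail := by
  have hnodup := hp.support_nodup
  rw [← Walk.cons_tail_support, List.nodup_cons] at hnodup
  exact hnodup.1

lemma isPath_append_of_inter_support {p : G.Walk u v} {q : G.Walk v w} (hp : p.IsPath)
    (hq : q.IsPath) (hpq : ∀ z ∈ p.support, z ∈ q.support → z = v) : (p.append q).IsPath := by
  rw [Walk.isPath_def, Walk.support_append, List.nodup_append']
  refine ⟨hp.support_nodup, hq.support_nodup.tail, fun z hzp hzq => ?_⟩
  obtain rfl := hpq z hzp (List.mem_of_mem_tail hzq)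
  exact notMem_tail_support_of_isPath hq hzq

lemma isCycle_append_of_inter_support {p : G.Walk u v} {q : G.Walk v u} (hp : p.IsPath)
    (hq : q.IsPath) (hpq : ∀ z ∈ p.support, z ∈ q.support → z = u ∨ z = v)
    (hlen : 1 < p.length) : (p.append q).IsCycle := by
  refine hp.isCycle_append hq (fun z hzp hzq => ?_) (Or.inl hlen)
  rcases hpq z (List.mem_of_mem_tail hzp) (List.mem_of_mem_tail hzq) with rfl | rfl
  · exact notMem_tail_support_of_isPath hp hzp
  · exact notMem_tail_support_of_isPath hq hzq

lemma ne_and_ne_of_disjoint_support {p : G.Walk s t} {q : G.Walk u v}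
    (hpq : p.support.Disjoint q.support) : s ≠ u ∧ t ≠ v :=
  ⟨fun h => hpq p.start_mem_support (h ▸ q.start_mem_support),
    fun h => hpq p.end_mem_support (h ▸ q.end_mem_support)⟩

lemma isCycle_append_comm {p : G.Walk u v} {q : G.Walk v u} :
    (p.append q).IsCycle ↔ (q.append p).IsCycle := by
  simp only [Walk.isCycle_def, Walk.isTrail_def, Walk.edges_append, Walk.tail_support_append,
    ne_eq, Walk.eq_nil_iff_nil, Walk.nil_append_iff, and_comm (a := p.Nil),
    List.nodup_append_comm (l₁ := p.edges), List.nodup_append_comm (l₁ := p.support.tail)]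

lemma eq_or_eq_of_isCycle_append {p : G.Walk u v} {q : G.Walk v u} (h : (p.append q).IsCycle)
    {z : V} (hzp : z ∈ p.support) (hzq : z ∈ q.support) : z = u ∨ z = v := by
  have hdisj := h.support_nodup
  rw [Walk.tail_support_append] at hdisj
  by_contra! hz
  exact List.disjoint_of_nodup_append hdisj (((Walk.mem_support_iff p).1 hzp).resolve_left hz.1)
    (((Walk.mem_support_iff q).1 hzq).resolve_left hz.2)

lemma disjoint_verts_deleteVerts_support (H : G.Subgraph) (p : G.Walk u v) :
    Disjoint (H.deleteVerts {z | z ∈ p.support}).verts p.toSubgraph.verts := by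
  rw [Walk.verts_toSubgraph]
  exact Set.disjoint_sdiff_left

lemma exists_arcs_of_isCycle {c : G.Walk w w} (hc : c.IsCycle) (hu : u ∈ c.support)
    (hv : v ∈ c.support) :
    ∃ (q : G.Walk u v) (r : G.Walk v u), (q.append r).IsCycle ∧
      q.length + r.length = c.length ∧ (q.append r).toSubgraph = c.toSubgraph := by
  classical
  have hv' : v ∈ (c.rotate u hu).support := by simpa using hv
  refine ⟨(c.rotate u hu).takeUntil v hv', (c.rotate u hu).dropUntil v hv', ?_, ?_, ?_⟩
  · rw [Walk.take_spec]
    exact hc.rotate hu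
  · rw [← Walk.length_append, Walk.take_spec, Walk.length_rotate]
  · rw [Walk.take_spec, Walk.toSubgraph_rotate]

lemma mem_support_of_reachable_of_le_toSubgraph_append {p : G.Walk s t} {q : G.Walk t s}
    (hpq : ∀ z ∈ p.support, z ∈ q.support → z = s ∨ z = t) {H : G.Subgraph}
    (hH : H ≤ (p.append q).toSubgraph) (hs : s ∉ H.verts) (ht : t ∉ H.verts) {a b : H.verts}
    (hab : H.coe.Reachable a b) (ha : a.1 ∈ p.support) : b.1 ∈ p.support := by
  obtain ⟨walk⟩ := hab
  induction walk with
  | nil => exact ha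
  | @cons a a' _ hadj _ ih =>
    have hadj' : p.toSubgraph.Adj a a' ∨ q.toSubgraph.Adj a a' := by
      simpa [Walk.toSubgraph_append] using hH.2 hadj
    rcases hadj' with hp | hq
    · exact ih ((Walk.mem_verts_toSubgraph p).1 (p.toSubgraph.edge_vert hp.symm))
    · rcases hpq a ha ((Walk.mem_verts_toSubgraph q).1 (q.toSubgraph.edge_vert hq)) with has | hat
      · exact absurd (has ▸ a.2) hs
      · exact absurd (hat ▸ a.2) ht

lemma arc_subset_or_arc_subset_of_reachable {H : G.Subgraph} {a b : H.verts} {q : G.Walk a b}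
    {r : G.Walk b a} (hc : (q.append r).IsCycle) (hH : H ≤ (q.append r).toSubgraph)
    (hab : H.coe.Reachable a b) :
    (∀ z ∈ q.support, z ∈ H.verts) ∨ ∀ z ∈ r.support, z ∈ H.verts := by
  by_contra! hmissing
  obtain ⟨⟨s, hsq, hs⟩, t, htr, ht⟩ := hmissing
  obtain ⟨q₁, q₂, rfl⟩ := Walk.mem_support_iff_exists_append.1 hsq
  obtain ⟨r₁, r₂, rfl⟩ := Walk.mem_support_iff_exists_append.1 htr
  have hrotated : ((r₂.append q₁).append (q₂.append r₁)).IsCycle := by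
    rw [← Walk.append_assoc, isCycle_append_comm]
    simpa only [Walk.append_assoc] using hc
  have hinter : ∀ z ∈ (r₂.append q₁).support, z ∈ (q₂.append r₁).support → z = t ∨ z = s :=
    fun _ => eq_or_eq_of_isCycle_append hrotated
  have hH' : H ≤ ((r₂.append q₁).append (q₂.append r₁)).toSubgraph := by
    simpa only [Walk.toSubgraph_append, sup_comm, sup_left_comm, sup_assoc] using hH
  have hb : b.1 ∈ (r₂.append q₁).support :=
    mem_support_of_reachable_of_le_toSubgraph_append hinter hH' ht hs hab (by simp)
  rcases hinter b hb (by simp) with hbt | hbs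
  · exact ht (hbt ▸ b.2)
  · exact hs (hbs ▸ b.2)

lemma exists_arcs_subset_verts {c : G.Walk w w} (hc : c.IsCycle) {H : G.Subgraph}
    (hH : H ≤ c.toSubgraph) {a b : H.verts} (hab : H.coe.Reachable a b) (hne : a.1 ≠ b.1) :
    ∃ q r : G.Walk a b, q.IsPath ∧ r.IsPath ∧ q.length + r.length = c.length ∧
      (∀ z ∈ q.support, z ∈ H.verts) ∧ ∀ z ∈ r.support, z ∈ c.toSubgraph.verts := by
  obtain ⟨q, r, hqr, hlen, heq⟩ := exists_arcs_of_isCycle hc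
    ((Walk.mem_verts_toSubgraph c).1 (hH.1 a.2)) ((Walk.mem_verts_toSubgraph c).1 (hH.1 b.2))
  have hq : q.IsPath := hqr.isPath_of_append_left (Walk.not_nil_of_ne hne.symm)
  have hr : r.IsPath := hqr.isPath_of_append_right (Walk.not_nil_of_ne hne)
  have hqc : ∀ z ∈ q.support, z ∈ c.toSubgraph.verts := fun z hz => by
    simp [← heq, hz]
  have hrc : ∀ z ∈ r.support, z ∈ c.toSubgraph.verts := fun z hz => by
    simp [← heq, hz]
  rcases arc_subset_or_arc_subset_of_reachable hqr (heq ▸ hH) hab with hqH | hrH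
  · exact ⟨q, r.reverse, hq, hr.reverse, by simpa using hlen, hqH, by simpa using hrc⟩
  · exact ⟨r.reverse, q, hr.reverse, hq, by simpa [add_comm] using hlen, by simpa using hrH, hqc⟩

end Walks

/-- `p` is an `A`–`B` path in Diestel's sense: a path meeting `A` in its first vertex only and `B`
in its last vertex only. The equivalences also encode that the ends lie in `A` and `B`. -/
structure IsPathBetween {V : Type*} {G : SimpleGraph V} (A B : Set V) {a b : V}
    (p : G.Walk a b) : Prop where
  isPath : p.IsPath
  mem_left_iff : ∀ z ∈ p.support, (z ∈ A ↔ z = a)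
  mem_right_iff : ∀ z ∈ p.support, (z ∈ B ↔ z = b)

section LinkedCycles

variable {V : Type*} {G : SimpleGraph V} {A B : Set V} {a₁ a₂ b₁ b₂ u v : V}

lemma isPathBetween_of_internal_notMem {p : G.Walk a₁ b₁} (hp : p.IsPath) (haA : a₁ ∈ A)
    (haB : a₁ ∉ B) (hbA : b₁ ∉ A) (hbB : b₁ ∈ B)
    (hinternal : ∀ z ∈ p.support, z ≠ a₁ → z ≠ b₁ → z ∉ A ∧ z ∉ B) : IsPathBetween A B p where
  isPath := hp
  mem_left_iff := by grind
  mem_right_iff := by grind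

lemma exists_isCycle_of_linked_paths {p₁ : G.Walk a₁ b₁} {p₂ : G.Walk a₂ b₂} {q : G.Walk a₁ a₂}
    {r : G.Walk b₁ b₂} (hp₁ : IsPathBetween A B p₁) (hp₂ : IsPathBetween A B p₂)
    (hp : p₁.support.Disjoint p₂.support) (hq : q.IsPath) (hr : r.IsPath)
    (hqA : ∀ z ∈ q.support, z ∈ A) (hrB : ∀ z ∈ r.support, z ∈ B)
    (hqr : q.support.Disjoint r.support) :
    ∃ c : G.Walk a₁ a₁, c.IsCycle ∧
      c.length = q.length + r.length + p₁.length + p₂.length := by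
  have hqp₂ : (q.append p₂).IsPath := isPath_append_of_inter_support hq hp₂.isPath
    fun z hzq hzp => (hp₂.mem_left_iff z hzp).1 (hqA z hzq)
  have hp₁r : (p₁.append r).IsPath := isPath_append_of_inter_support hp₁.isPath hr
    fun z hzp hzr => (hp₁.mem_right_iff z hzp).1 (hrB z hzr)
  have hinter : ∀ z ∈ (q.append p₂).support, z ∈ (p₁.append r).reverse.support →
      z = a₁ ∨ z = b₂ := by
    intro z hz hz'
    rw [Walk.support_reverse, List.mem_reverse] at hz'
    rcases (Walk.mem_support_append_iff ..).1 hz with hzq | hzp₂ <;>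
      rcases (Walk.mem_support_append_iff ..).1 hz' with hzp₁ | hzr
    · exact Or.inl ((hp₁.mem_left_iff z hzp₁).1 (hqA z hzq))
    · exact (hqr hzq hzr).elim
    · exact (hp hzp₁ hzp₂).elim
    · exact Or.inr ((hp₂.mem_right_iff z hzp₂).1 (hrB z hzr))
  have hne_a : a₁ ≠ a₂ := (ne_and_ne_of_disjoint_support hp).1
  have hne_ab : a₂ ≠ b₂ := fun h => hqr q.end_mem_support (h ▸ r.end_mem_support)
  have hq_pos : 0 < q.length := Walk.not_nil_iff_lt_length.1 (Walk.not_nil_of_ne hne_a)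
  have hp₂_pos : 0 < p₂.length := Walk.not_nil_iff_lt_length.1 (Walk.not_nil_of_ne hne_ab)
  refine ⟨(q.append p₂).append (p₁.append r).reverse,
    isCycle_append_of_inter_support hqp₂ hp₁r.reverse hinter ?_, ?_⟩
  · rw [Walk.length_append]
    omega
  · simp only [Walk.length_append, Walk.length_reverse]
    omega

lemma exists_isCycle_length_add_length_lt {c₁ : G.Walk u u} {c₂ : G.Walk v v} (hc₁ : c₁.IsCycle)
    (hc₂ : c₂.IsCycle) {H₁ H₂ : G.Subgraph} (hH₁ : H₁ ≤ c₁.toSubgraph) (hH₂ : H₂ ≤ c₂.toSubgraph)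
    (hdisj₁ : Disjoint H₁.verts c₂.toSubgraph.verts)
    (hdisj₂ : Disjoint H₂.verts c₁.toSubgraph.verts) {a₁ a₂ : H₁.verts} {b₁ b₂ : H₂.verts}
    (ha : H₁.coe.Reachable a₁ a₂) (hb : H₂.coe.Reachable b₁ b₂) {p₁ : G.Walk a₁ b₁}
    {p₂ : G.Walk a₂ b₂} (hp₁ : IsPathBetween c₁.toSubgraph.verts c₂.toSubgraph.verts p₁)
    (hp₂ : IsPathBetween c₁.toSubgraph.verts c₂.toSubgraph.verts p₂)
    (hp : p₁.support.Disjoint p₂.support) :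
    ∃ (w : V) (c : G.Walk w w), c.IsCycle ∧ c₁.length + c₂.length < 2 * c.length := by
  obtain ⟨hne_a, hne_b⟩ := ne_and_ne_of_disjoint_support hp
  obtain ⟨q, q', hq, hq', hq_len, hqH, hq'c⟩ := exists_arcs_subset_verts hc₁ hH₁ ha hne_a
  obtain ⟨r, r', hr, hr', hr_len, hrH, hr'c⟩ := exists_arcs_subset_verts hc₂ hH₂ hb hne_b
  obtain ⟨c, hc, hc_len⟩ := exists_isCycle_of_linked_paths hp₁ hp₂ hp hq hr'
    (fun z hz => hH₁.1 (hqH z hz)) hr'c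
    (fun z hzq hzr' => hdisj₁.notMem_of_mem_left (hqH z hzq) (hr'c z hzr'))
  obtain ⟨d, hd, hd_len⟩ := exists_isCycle_of_linked_paths hp₁ hp₂ hp hq' hr
    hq'c (fun z hz => hH₂.1 (hrH z hz))
    (fun z hzq' hzr => hdisj₂.notMem_of_mem_left (hrH z hzr) (hq'c z hzq'))
  have hne_ab : a₁.1 ≠ b₁ := fun h => hdisj₁.notMem_of_mem_left a₁.2 (h ▸ hH₂.1 b₁.2)
  have hp₁_pos : 0 < p₁.length := Walk.not_nil_iff_lt_length.1 (Walk.not_nil_of_ne hne_ab)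
  rcases le_total d.length c.length with hle | hle
  · exact ⟨a₁, c, hc, by omega⟩
  · exact ⟨a₁, d, hd, by omega⟩

end LinkedCycles

theorem no_two_disjoint_paths_between_components_general {V : Type*} {G : SimpleGraph V} {u v : V}
    {c1 : G.Walk u u} {c2 : G.Walk v v} (h1 : IsLongestCycle G c1) (h2 : IsLongestCycle G c2)
    {x y : Set V}
    (hx : ∃ K : ((c1.toSubgraph.deleteVerts {w | w ∈ c2.support}).coe).ConnectedComponent,
      x = Subtype.val '' K.supp)
    (hy : ∃ K : ((c2.toSubgraph.deleteVerts {w | w ∈ c1.support}).coe).ConnectedComponent,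
      y = Subtype.val '' K.supp) :
    ¬ ∃ (a1 b1 a2 b2 : V) (p1 : G.Walk a1 b1) (p2 : G.Walk a2 b2),
        p1.IsPath ∧ p2.IsPath ∧
        a1 ∈ x ∧ b1 ∈ y ∧ a2 ∈ x ∧ b2 ∈ y ∧
        (∀ z ∈ p1.support, z ∉ p2.support) ∧
        (∀ z ∈ p1.support, z ≠ a1 → z ≠ b1 → z ∉ c1.support ∧ z ∉ c2.support) ∧
        (∀ z ∈ p2.support, z ≠ a2 → z ≠ b2 → z ∉ c1.support ∧ z ∉ c2.support) := by
  obtain ⟨K, rfl⟩ := hx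
  obtain ⟨L, rfl⟩ := hy
  rintro ⟨_, _, _, _, p1, p2, hp1, hp2, ⟨a1, ha1, rfl⟩, ⟨b1, hb1, rfl⟩, ⟨a2, ha2, rfl⟩,
    ⟨b2, hb2, rfl⟩, hdisj, hint1, hint2⟩
  simp only [← Walk.mem_verts_toSubgraph c1, ← Walk.mem_verts_toSubgraph c2] at hint1 hint2
  have hdisj1 := disjoint_verts_deleteVerts_support c1.toSubgraph c2
  have hdisj2 := disjoint_verts_deleteVerts_support c2.toSubgraph c1
  have hlink1 : IsPathBetween c1.toSubgraph.verts c2.toSubgraph.verts p1 :=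
    isPathBetween_of_internal_notMem hp1 a1.2.1 (hdisj1.notMem_of_mem_left a1.2)
      (hdisj2.notMem_of_mem_left b1.2) b1.2.1 hint1
  have hlink2 : IsPathBetween c1.toSubgraph.verts c2.toSubgraph.verts p2 :=
    isPathBetween_of_internal_notMem hp2 a2.2.1 (hdisj1.notMem_of_mem_left a2.2)
      (hdisj2.notMem_of_mem_left b2.2) b2.2.1 hint2
  obtain ⟨w, c, hc, hlt⟩ := exists_isCycle_length_add_length_lt h1.1 h2.1
    Subgraph.deleteVerts_le Subgraph.deleteVerts_le hdisj1 hdisj2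
    (K.reachable_of_mem_supp ha1 ha2) (L.reachable_of_mem_supp hb1 hb2) hlink1 hlink2
    fun z hz1 hz2 => hdisj z hz1 hz2
  have hle1 := h1.2 w c hc
  have hle2 := h2.2 w c hc
  omega

theorem no_two_disjoint_paths_between_components
    (V : Type) [Fintype V] (G : SimpleGraph V)
    (u v : V) (c1 : G.Walk u u) (c2 : G.Walk v v)
    (h1 : IsLongestCycle G c1) (h2 : IsLongestCycle G c2)
    (x y : Set V)
    -- `x` is the vertex set of a connected component of the cycle `c1` minus `V(c2)`:
    (hx : ∃ K : ((c1.toSubgraph.deleteVerts {w | w ∈ c2.support}).coe).ConnectedComponent,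
      x = Subtype.val '' K.supp)
    -- `y` is the vertex set of a connected component of the cycle `c2` minus `V(c1)`:
    (hy : ∃ K : ((c2.toSubgraph.deleteVerts {w | w ∈ c1.support}).coe).ConnectedComponent,
      y = Subtype.val '' K.supp) :
    ¬ ∃ (a1 b1 a2 b2 : V) (p1 : G.Walk a1 b1) (p2 : G.Walk a2 b2),
        p1.IsPath ∧ p2.IsPath ∧
        a1 ∈ x ∧ b1 ∈ y ∧ a2 ∈ x ∧ b2 ∈ y ∧
        -- `p1` and `p2` are vertex-disjoint from each other:
        (∀ z ∈ p1.support, z ∉ p2.support) ∧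
        -- no internal vertex of `p1` or `p2` lies in `V(c1) ∪ V(c2)`:
        (∀ z ∈ p1.support, z ≠ a1 → z ≠ b1 → z ∉ c1.support ∧ z ∉ c2.support) ∧
        (∀ z ∈ p2.support, z ≠ a2 → z ≠ b2 → z ∉ c1.support ∧ z ∉ c2.support) :=
  no_two_disjoint_paths_between_components_general h1 h2 hx hy
end
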